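/- arXiv:2207.02034 — 3 statements merged into one kernel-verified Lean document; each statement's English description precedes it below -/
import Mathlib

section
/- (Quantum Capelli identity.) Let R be a skew-invertible Hecke symmetry with parameter q of rank m, with j_q ≠ 0 for 2 ≤ j ≤ m, let M and D be N×N matrices with entries in a unital associative ℂ-algebra 𝒜 satisfying the Reflection Equation R M₁ R M₁ = M₁ R M₁ R, the relation R⁻¹ D₁ R⁻¹ D₁ = D₁ R⁻¹ D₁ R⁻¹, and the permutation relations D₁ R M₁ = R M₁ R⁻¹ D₁ R⁻¹ + I, and set L := M D. Then, as an identity in 𝒜: ⟨A^(m) L_{1̄} (L_{2̄} + q·I) ⋯ (L_{m̄} + q^{m−1}·(m−1)_q·I)⟩_{1…m} = q^{−m} · det_R M · det_{R⁻¹} D, where det_R M := q^{m²} ⟨A^(m) M_{1̄} ⋯ M_{m̄}⟩_{1…m} and det_{R⁻¹} D := q^{m²} ⟨A^(m) D_{m̄} ⋯ D_{1̄}⟩_{1…m}. -/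
open Matrix BigOperators

noncomputable section

/-- An `N² × N²` complex matrix, viewed as an operator on `ℂ^N ⊗ ℂ^N`. -/
abbrev RMat (N : ℕ) := Matrix (Fin N × Fin N) (Fin N × Fin N) ℂ

/-- A matrix on the `k`-th tensor power of `ℂ^N`, with entries in `A`. -/
abbrev TMat (N k : ℕ) (A : Type _) := Matrix (Fin k → Fin N) (Fin k → Fin N) A

/-- The `q`-number `j_q = (q^j - q^{-j})/(q - q^{-1})`. -/
def qNum (q : ℂ) (j : ℕ) : ℂ := (q ^ j - q⁻¹ ^ j) / (q - q⁻¹)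

/-- Embedding of an `N²×N²` matrix `R` into the `k`-th tensor power,
acting in the (0-based) tensor factors `i` and `i+1`.  The paper's `R_i`
(1-based) is `embR k R (i-1)`. -/
def embR {N : ℕ} (k : ℕ) (R : RMat N) (i : ℕ) : TMat N k ℂ := fun f g =>
  if h : i + 1 < k then
    if ∀ j : Fin k, j.val ≠ i → j.val ≠ i + 1 → f j = g j then
      R (f ⟨i, Nat.lt_of_succ_lt h⟩, f ⟨i + 1, h⟩) (g ⟨i, Nat.lt_of_succ_lt h⟩, g ⟨i + 1, h⟩)
    else 0
  else (1 : TMat N k ℂ) f g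

/-- `X ⊗ I^{⊗(k-1)}` : the first copy `X_{1̄}` of an `N×N` matrix over `A`. -/
def emb1 {N : ℕ} (k : ℕ) {A : Type _} [Ring A] (X : Matrix (Fin N) (Fin N) A) :
    TMat N k A := fun f g =>
  if h : 0 < k then
    if ∀ j : Fin k, j.val ≠ 0 → f j = g j then X (f ⟨0, h⟩) (g ⟨0, h⟩) else 0
  else (1 : TMat N k A) f g

/-- Lift a complex matrix to a matrix over the `ℂ`-algebra `A`. -/
def liftC {N k : ℕ} (A : Type _) [Ring A] [Algebra ℂ A] (X : TMat N k ℂ) : TMat N k A :=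
  X.map (algebraMap ℂ A)

/-- The copies `X_{1̄}, X_{2̄}, …` of `X` in the `k`-th tensor power:
`copyX k R Rinv X i` is the paper's `X_{\overline{i+1}}`, i.e.
`X_{1̄} = X ⊗ I^{⊗(k-1)}` and `X_{\overline{i+1}} = R_i X_{ī} R_i⁻¹`. -/
def copyX {N : ℕ} (k : ℕ) (R Rinv : RMat N) {A : Type _} [Ring A] [Algebra ℂ A]
    (X : Matrix (Fin N) (Fin N) A) : ℕ → TMat N k A
  | 0 => emb1 k X
  | i + 1 => liftC A (embR k R i) * copyX k R Rinv X i * liftC A (embR k Rinv i)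

/-- The `R`-skew-symmetrizers, on the ambient `k`-th tensor power:
`Asym k R q j` is `A^{(j)}` (acting in the first `j` factors). -/
def Asym {N : ℕ} (k : ℕ) (R : RMat N) (q : ℂ) : ℕ → TMat N k ℂ
  | 0 => 1
  | 1 => 1
  | j + 2 =>
      (qNum q (j + 2))⁻¹ •
        (Asym k R q (j + 1) *
          ((q ^ (j + 1)) • (1 : TMat N k ℂ) - (qNum q (j + 1)) • embR k R j) *
          Asym k R q (j + 1))

/-- The `R`-symmetrizers, on the ambient `k`-th tensor power:
`Ssym k R q j` is `S^{(j)}` (acting in the first `j` factors). -/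
def Ssym {N : ℕ} (k : ℕ) (R : RMat N) (q : ℂ) : ℕ → TMat N k ℂ
  | 0 => 1
  | 1 => 1
  | j + 2 =>
      (qNum q (j + 2))⁻¹ •
        (Ssym k R q (j + 1) *
          ((q⁻¹ ^ (j + 1)) • (1 : TMat N k ℂ) + (qNum q (j + 1)) • embR k R j) *
          Ssym k R q (j + 1))

/-- The braid relation `R₁₂ R₂₃ R₁₂ = R₂₃ R₁₂ R₂₃` on `(ℂ^N)^{⊗3}`. -/
def IsBraiding {N : ℕ} (R : RMat N) : Prop :=
  embR 3 R 0 * embR 3 R 1 * embR 3 R 0 = embR 3 R 1 * embR 3 R 0 * embR 3 R 1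

/-- The Hecke condition `(q·I − R)(q⁻¹·I + R) = 0`. -/
def HeckeCond {N : ℕ} (R : RMat N) (q : ℂ) : Prop :=
  (q • (1 : RMat N) - R) * (q⁻¹ • (1 : RMat N) + R) = 0

/-- The Reflection Equation `R M₁ R M₁ = M₁ R M₁ R` (on `(ℂ^N)^{⊗2}`,
with entries in `A`). -/
def RERel {N : ℕ} (R : RMat N) {A : Type _} [Ring A] [Algebra ℂ A]
    (M : Matrix (Fin N) (Fin N) A) : Prop :=
  liftC A (embR 2 R 0) * emb1 2 M * liftC A (embR 2 R 0) * emb1 2 M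
    = emb1 2 M * liftC A (embR 2 R 0) * emb1 2 M * liftC A (embR 2 R 0)

/-- The relation `R⁻¹ D₁ R⁻¹ D₁ = D₁ R⁻¹ D₁ R⁻¹` on the matrix `D`,
where `Rinv = R⁻¹`. -/
def DDRel {N : ℕ} (Rinv : RMat N) {A : Type _} [Ring A] [Algebra ℂ A]
    (D : Matrix (Fin N) (Fin N) A) : Prop :=
  liftC A (embR 2 Rinv 0) * emb1 2 D * liftC A (embR 2 Rinv 0) * emb1 2 D
    = emb1 2 D * liftC A (embR 2 Rinv 0) * emb1 2 D * liftC A (embR 2 Rinv 0)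

/-- The permutation relations `D₁ R M₁ = R M₁ R⁻¹ D₁ R⁻¹ + I`, where `Rinv = R⁻¹`. -/
def PermRel {N : ℕ} (R Rinv : RMat N) {A : Type _} [Ring A] [Algebra ℂ A]
    (M D : Matrix (Fin N) (Fin N) A) : Prop :=
  emb1 2 D * liftC A (embR 2 R 0) * emb1 2 M
    = liftC A (embR 2 R 0) * emb1 2 M * liftC A (embR 2 Rinv 0) * emb1 2 D *
        liftC A (embR 2 Rinv 0) + 1

/-- `Ψ` is the skew-inverse of `R`:  `Σ_{j,b} R^{ij}_{ab} Ψ^{bc}_{jd} = δ^i_d δ^c_a`. -/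
def SkewInv {N : ℕ} (R Ψ : RMat N) : Prop :=
  ∀ i a c d : Fin N,
    (∑ j : Fin N, ∑ b : Fin N, R (i, j) (a, b) * Ψ (b, c) (j, d))
      = if i = d ∧ c = a then 1 else 0

/-- The matrix `C`, `C^c_d = Σ_i Ψ^{ic}_{id}`. -/
def Cmat {N : ℕ} (Ψ : RMat N) : Matrix (Fin N) (Fin N) ℂ :=
  fun c d => ∑ i : Fin N, Ψ (i, c) (i, d)

/-- The `R`-trace over all `k` tensor factors: `⟨X⟩_{1…k} = Tr(C^{⊗k} X)`. -/
def rTr {N k : ℕ} {A : Type _} [Ring A] [Algebra ℂ A] (C : Matrix (Fin N) (Fin N) ℂ)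
    (X : TMat N k A) : A :=
  ∑ f : Fin k → Fin N, ∑ g : Fin k → Fin N, (∏ j : Fin k, C (f j) (g j)) • X g f

/-- The chain `X_{1̄} X_{2̄} ⋯ X_{n̄}`. -/
def upChain {N : ℕ} (k : ℕ) (R Rinv : RMat N) {A : Type _} [Ring A] [Algebra ℂ A]
    (X : Matrix (Fin N) (Fin N) A) (n : ℕ) : TMat N k A :=
  ((List.range n).map (copyX k R Rinv X)).prod

/-- The reversed chain `X_{n̄} X_{\overline{n-1}} ⋯ X_{1̄}`. -/
def downChain {N : ℕ} (k : ℕ) (R Rinv : RMat N) {A : Type _} [Ring A] [Algebra ℂ A]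
    (X : Matrix (Fin N) (Fin N) A) (n : ℕ) : TMat N k A :=
  ((List.range n).reverse.map (copyX k R Rinv X)).prod

/-- The Capelli chain `L_{1̄}(L_{2̄} + q·1_q I)(L_{3̄} + q²·2_q I) ⋯ (L_{n̄} + q^{n-1}·(n-1)_q I)`
(note `0_q = 0`). -/
def capChainA {N : ℕ} (k : ℕ) (R Rinv : RMat N) (q : ℂ) {A : Type _} [Ring A] [Algebra ℂ A]
    (L : Matrix (Fin N) (Fin N) A) (n : ℕ) : TMat N k A :=
  ((List.range n).map
    (fun i => copyX k R Rinv L i + ((q ^ i) * qNum q i) • (1 : TMat N k A))).prod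

/-- The symmetric Capelli chain
`L_{1̄}(L_{2̄} - q⁻¹·1_q I) ⋯ (L_{n̄} - q^{-(n-1)}·(n-1)_q I)`. -/
def capChainS {N : ℕ} (k : ℕ) (R Rinv : RMat N) (q : ℂ) {A : Type _} [Ring A] [Algebra ℂ A]
    (L : Matrix (Fin N) (Fin N) A) (n : ℕ) : TMat N k A :=
  ((List.range n).map
    (fun i => copyX k R Rinv L i - ((q⁻¹ ^ i) * qNum q i) • (1 : TMat N k A))).prod

/-- The descending chain `R_{a→b} = R_a R_{a-1} ⋯ R_b` (1-based indices;
identity when `b > a`). -/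
def rChainDesc {N : ℕ} (k : ℕ) (R : RMat N) (a b : ℕ) : TMat N k ℂ :=
  ((List.range' b (a + 1 - b)).reverse.map (fun j => embR k R (j - 1))).prod

/-- The ascending chain `R_{b→a} = R_b R_{b+1} ⋯ R_a` (1-based indices;
identity when `b > a`). -/
def rChainAsc {N : ℕ} (k : ℕ) (R : RMat N) (b a : ℕ) : TMat N k ℂ :=
  ((List.range' b (a + 1 - b)).map (fun j => embR k R (j - 1))).prod

/-!
The copies `X_j` of a matrix are obtained from one another by conjugation with the crossings, so
that the relations between the first two copies propagate to any two consecutive ones. On a vector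
`Z` that is skew for the crossings, one commutes the factors of `D_{k-1} ⋯ D_0` one at a time past
the `M_k` of `L_k = M_k D_k`. Each passage leaves behind a scalar multiple of `D_{k-1} ⋯ D_0 Z`; the
scalars add up to `-(q + q³ + ⋯ + q^{2k-1}) = -q^k k_q`, which is exactly
what the constant in the factor containing `L_k` compensates. Hence, on the image of `A^(m)`, the
Capelli product equals `q^{m(m-1)} M_0 ⋯ M_{m-1} D_{m-1} ⋯ D_0`.

By the reflection equation `A^(m)` commutes with `M_0 ⋯ M_{m-1}`. It is an idempotent of rank one,
so that `A^(m) Z A^(m)` is the product of `A^(m)` with an element of the algebra of entries, and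
the `R`-trace splits into the two determinants. The cyclicity of the `R`-trace used here amounts to
`C ⊗ C` commuting with `R`, a consequence of skew-invertibility and the braid relation.
-/

namespace QuantumCapelli

open scoped Kronecker

section Braids

/-- The Artin relations of the braid group on `m` strands, imposed on `σ 0, …, σ (m - 2)`;
the later values of `σ` are unconstrained. -/
structure IsBraidFamily {G : Type*} [Monoid G] (m : ℕ) (σ : ℕ → G) : Prop where
  braid : ∀ i, i + 2 < m → σ i * σ (i + 1) * σ i = σ (i + 1) * σ i * σ (i + 1)
  commute : ∀ i j, i + 1 < j → j + 1 < m → Commute (σ i) (σ j)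

theorem IsBraidFamily.map {G H : Type*} [Monoid G] [Monoid H] {m : ℕ} {σ : ℕ → G}
    (hσ : IsBraidFamily m σ) (φ : G →* H) : IsBraidFamily m (fun i => φ (σ i)) where
  braid i hi := by simp only [← map_mul, hσ.braid i hi]
  commute i j hij hj := (hσ.commute i j hij hj).map φ

variable {E F : Type*} [Ring E] [Ring F]

/-- The inner automorphism `x ↦ u x u⁻¹`, as a ring homomorphism. -/
def conjHom (u : Eˣ) : E →+* E :=
  MulSemiringAction.toRingHom (ConjAct Eˣ) E (ConjAct.toConjAct u)

theorem conjHom_apply (u : Eˣ) (x : E) : conjHom u x = u * x * ↑u⁻¹ :=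
  ConjAct.units_smul_def _ _

theorem conjHom_mul_apply (u v : Eˣ) (x : E) : conjHom (u * v) x = conjHom u (conjHom v x) :=
  mul_smul (ConjAct.toConjAct u) (ConjAct.toConjAct v) x

theorem conjHom_eq_self {u : Eˣ} {x : E} (h : Commute (u : E) x) : conjHom u x = x := by
  rw [conjHom_apply, h.eq, mul_assoc, Units.mul_inv, mul_one]

/-- The copies `X_{i+1} = σ_i X_i σ_i⁻¹` of `X_0 = X` on the successive strands. -/
def strandCopy (σ : ℕ → Eˣ) (X : E) : ℕ → E
  | 0 => X
  | i + 1 => conjHom (σ i) (strandCopy σ X i)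

/-- `X` acts on the strand `0` only: it commutes with the crossings of the other strands. -/
def IsFirstStrand (m : ℕ) (σ : ℕ → Eˣ) (X : E) : Prop :=
  ∀ i, 0 < i → i + 1 < m → Commute (σ i : E) X

/-- The reflection equation `s X s X = X s X s`. -/
def ReflectionRel (s : Eˣ) (X : E) : Prop :=
  s * X * s * X = X * s * X * s

/-- The relation `Y s X = s X s⁻¹ Y s⁻¹ + 1` allowing to move `Y` to the right of `X`. -/
def PermutationRel (s : Eˣ) (X Y : E) : Prop :=
  Y * s * X = s * X * ↑s⁻¹ * Y * ↑s⁻¹ + 1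

theorem ReflectionRel.map {s : Eˣ} {X : E} (h : ReflectionRel s X) (φ : E →+* F) :
    ReflectionRel (Units.map (φ : E →* F) s) (φ X) := by
  have hφ := congrArg φ h
  simp only [map_mul] at hφ
  exact hφ

theorem PermutationRel.map {s : Eˣ} {X Y : E} (h : PermutationRel s X Y) (φ : E →+* F) :
    PermutationRel (Units.map (φ : E →* F) s) (φ X) (φ Y) := by
  have hφ := congrArg φ h
  simp only [map_mul, map_add, map_one] at hφ
  exact hφ

theorem ReflectionRel.commute_mul_conj {s : Eˣ} {X : E} (h : ReflectionRel s X) :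
    Commute (s : E) (X * conjHom s X) := by
  have h' : s * X * s * X = X * s * X * s := h
  calc s * (X * conjHom s X) = s * X * s * X * ↑s⁻¹ := by simp only [conjHom_apply, mul_assoc]
    _ = X * conjHom s X * s := by rw [h']; simp [conjHom_apply, mul_assoc]

variable {m : ℕ} {σ : ℕ → Eˣ} {X Y : E}

theorem strandCopy_succ (j : ℕ) :
    strandCopy σ X (j + 1) = conjHom (σ j) (strandCopy σ X j) := rfl

theorem strandCopy_mul (X Y : E) (j : ℕ) :
    strandCopy σ (X * Y) j = strandCopy σ X j * strandCopy σ Y j := by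
  induction j with
  | zero => rfl
  | succ j ih => simp only [strandCopy_succ, ih, map_mul]

theorem IsFirstStrand.mul (hX : IsFirstStrand m σ X) (hY : IsFirstStrand m σ Y) :
    IsFirstStrand m σ (X * Y) :=
  fun i h0 hi => (hX i h0 hi).mul_right (hY i h0 hi)

theorem IsBraidFamily.conj_eq (hσ : IsBraidFamily m σ) {i : ℕ} (hi : i + 2 < m) :
    σ i * σ (i + 1) * σ i * (σ i * σ (i + 1))⁻¹ = σ (i + 1) := by
  rw [hσ.braid i hi, mul_assoc (σ (i + 1)), mul_inv_cancel_right]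

theorem IsBraidFamily.commute_strandCopy_of_lt (hσ : IsBraidFamily m σ)
    (hX : IsFirstStrand m σ X) {i j : ℕ} (hji : j < i) (hi : i + 1 < m) :
    Commute (σ i : E) (strandCopy σ X j) := by
  induction j with
  | zero => exact hX i hji hi
  | succ j ih =>
    have hij : Commute (σ i : E) (σ j) := congrArg Units.val (hσ.commute j i hji hi).symm
    rw [strandCopy_succ, conjHom_apply]
    exact (hij.mul_right (ih (by omega))).mul_right hij.units_inv_right

theorem IsBraidFamily.conjHom_strandCopy (hσ : IsBraidFamily m σ) (hX : IsFirstStrand m σ X)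
    {j : ℕ} (hj : j + 2 < m) :
    conjHom (σ j * σ (j + 1)) (strandCopy σ X j) = strandCopy σ X (j + 1) := by
  rw [conjHom_mul_apply, conjHom_eq_self (hσ.commute_strandCopy_of_lt hX (by omega) hj),
    strandCopy_succ]

theorem IsBraidFamily.commute_strandCopy_of_succ_lt (hσ : IsBraidFamily m σ)
    (hX : IsFirstStrand m σ X) {i j : ℕ} (hij : i + 1 < j) (hj : j < m) :
    Commute (σ i : E) (strandCopy σ X j) := by
  induction j, hij using Nat.le_induction with
  | base =>
    have hfar : Commute (σ (i + 1) : E) (strandCopy σ X i) :=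
      hσ.commute_strandCopy_of_lt hX (by omega) hj
    have hconj : conjHom (σ (i + 1) * σ i) (σ (i + 1) : E) = σ i := by
      have h : σ (i + 1) * σ i * σ (i + 1) * (σ (i + 1) * σ i)⁻¹ = σ i := by
        rw [← hσ.braid i hj, mul_assoc (σ i), mul_inv_cancel_right]
      simpa only [conjHom_apply, Units.val_mul] using congrArg Units.val h
    simpa only [hconj, conjHom_mul_apply, Nat.succ_eq_add_one,
      strandCopy_succ] using hfar.map (conjHom (σ (i + 1) * σ i))
  | succ j hij ih =>
    have hc : Commute (σ i : E) (σ j) := congrArg Units.val (hσ.commute i j hij hj)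
    rw [strandCopy_succ, conjHom_apply]
    exact (hc.mul_right (ih (by omega))).mul_right hc.units_inv_right

/-- Conjugation by `σ_j σ_{j+1}` sends `σ_j` to `σ_{j+1}` and `X_j` to `X_{j+1}`; iterating it moves
the relations holding on the first two strands to any two consecutive strands. -/
theorem IsBraidFamily.exists_ringHom_shift (hσ : IsBraidFamily m σ) {j : ℕ} (hj : j + 1 < m) :
    ∃ φ : E →+* E, Units.map (φ : E →* E) (σ 0) = σ j ∧
      ∀ X, IsFirstStrand m σ X → φ X = strandCopy σ X j := by
  induction j with
  | zero => exact ⟨RingHom.id E, rfl, fun X _ => rfl⟩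
  | succ j ih =>
    obtain ⟨φ, hφσ, hφX⟩ := ih (by omega)
    refine ⟨(conjHom (σ j * σ (j + 1))).comp φ, ?_, fun X hX => ?_⟩
    · ext
      have h := congrArg Units.val hφσ
      simp only [Units.coe_map, MonoidHom.coe_coe] at h
      simpa only [Units.coe_map, MonoidHom.coe_coe, RingHom.comp_apply, h, conjHom_apply,
        Units.val_mul] using congrArg Units.val (hσ.conj_eq hj)
    · rw [RingHom.comp_apply, hφX X hX, hσ.conjHom_strandCopy hX hj]

theorem ReflectionRel.shift (h : ReflectionRel (σ 0) X) (hσ : IsBraidFamily m σ)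
    (hX : IsFirstStrand m σ X) {j : ℕ} (hj : j + 1 < m) :
    ReflectionRel (σ j) (strandCopy σ X j) := by
  obtain ⟨φ, hφσ, hφX⟩ := hσ.exists_ringHom_shift hj
  simpa only [hφσ, hφX X hX] using h.map φ

theorem ReflectionRel.shift_inv (h : ReflectionRel (σ 0)⁻¹ X) (hσ : IsBraidFamily m σ)
    (hX : IsFirstStrand m σ X) {j : ℕ} (hj : j + 1 < m) :
    ReflectionRel (σ j)⁻¹ (strandCopy σ X j) := by
  obtain ⟨φ, hφσ, hφX⟩ := hσ.exists_ringHom_shift hj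
  simpa only [map_inv, hφσ, hφX X hX] using h.map φ

theorem PermutationRel.shift (h : PermutationRel (σ 0) X Y) (hσ : IsBraidFamily m σ)
    (hX : IsFirstStrand m σ X) (hY : IsFirstStrand m σ Y) {j : ℕ} (hj : j + 1 < m) :
    PermutationRel (σ j) (strandCopy σ X j) (strandCopy σ Y j) := by
  obtain ⟨φ, hφσ, hφX⟩ := hσ.exists_ringHom_shift hj
  simpa only [hφσ, hφX X hX, hφX Y hY] using h.map φ

/-- The ascending product `X_0 X_1 ⋯ X_{n-1}`. -/
def upProd (σ : ℕ → Eˣ) (X : E) (n : ℕ) : E :=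
  ((List.range n).map (strandCopy σ X)).prod

/-- The descending product `X_{n-1} ⋯ X_1 X_0`. -/
def downProd (σ : ℕ → Eˣ) (X : E) (n : ℕ) : E :=
  ((List.range n).reverse.map (strandCopy σ X)).prod

theorem upProd_succ (n : ℕ) : upProd σ X (n + 1) = upProd σ X n * strandCopy σ X n := by
  simp [upProd, List.range_succ]

theorem downProd_zero : downProd σ X 0 = 1 := rfl

theorem downProd_succ (n : ℕ) : downProd σ X (n + 1) = strandCopy σ X n * downProd σ X n := by
  simp [downProd, List.range_succ]

theorem IsBraidFamily.commute_downProd (hσ : IsBraidFamily m σ) (hX : IsFirstStrand m σ X)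
    {i n : ℕ} (hni : n ≤ i) (hi : i + 1 < m) : Commute (σ i : E) (downProd σ X n) := by
  refine Commute.list_prod_right _ _ fun x hx => ?_
  obtain ⟨j, hj, rfl⟩ := List.mem_map.1 hx
  have hjn : j < n := List.mem_range.1 (List.mem_reverse.1 hj)
  exact hσ.commute_strandCopy_of_lt hX (by omega) hi

theorem IsBraidFamily.commute_upProd (hσ : IsBraidFamily m σ) (hX : IsFirstStrand m σ X)
    (hXX : ∀ j, j + 1 < m → ReflectionRel (σ j) (strandCopy σ X j)) {i n : ℕ} (hin : i + 2 ≤ n)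
    (hn : n ≤ m) :
    Commute (σ i : E) (upProd σ X n) := by
  induction n, hin using Nat.le_induction with
  | base =>
    have hlow : Commute (σ i : E) (upProd σ X i) := by
      refine Commute.list_prod_right _ _ fun x hx => ?_
      obtain ⟨j, hj, rfl⟩ := List.mem_map.1 hx
      exact hσ.commute_strandCopy_of_lt hX (List.mem_range.1 hj) hn
    have hpair := (hXX i hn).commute_mul_conj
    rw [upProd_succ, upProd_succ, mul_assoc]
    exact hlow.mul_right hpair
  | succ n hin ih =>
    rw [upProd_succ]
    exact (ih (by omega)).mul_right (hσ.commute_strandCopy_of_succ_lt hX (by omega) hn)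

end Braids

section SkewVectors

variable {𝕜 E : Type*} [Field 𝕜] [Ring E] [Algebra 𝕜 E] {m : ℕ} {σ : ℕ → Eˣ} {q : 𝕜} {X Y Z : E}

theorem units_inv_mul_eq_smul {u : Eˣ} {c : 𝕜} (hc : c ≠ 0) (h : u * Z = c • Z) :
    ↑u⁻¹ * Z = c⁻¹ • Z := by
  rw [Units.inv_mul_eq_iff_eq_mul, mul_smul_comm, h, inv_smul_smul₀ hc]

/-- `Z` is skew in the first `k` strands: the crossings act on it by the eigenvalue `-q⁻¹`. -/
def IsSkew (σ : ℕ → Eˣ) (q : 𝕜) (k : ℕ) (Z : E) : Prop :=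
  ∀ i, i + 1 < k → σ i * Z = (-q⁻¹) • Z

theorem IsSkew.mono {k l : ℕ} (hZ : IsSkew σ q l Z) (hkl : k ≤ l) : IsSkew σ q k Z :=
  fun i hi => hZ i (by omega)

theorem IsSkew.mul_of_commute {k i : ℕ} {W : E} (hZ : IsSkew σ q k Z) (hi : i + 1 < k)
    (hW : Commute (σ i : E) W) : σ i * (W * Z) = (-q⁻¹) • (W * Z) := by
  rw [← mul_assoc, hW.eq, mul_assoc, hZ i hi, mul_smul_comm]

/-- The product `σ_{j+n-1} ⋯ σ_{j+1} σ_j`. -/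
def descChain {G : Type*} [Monoid G] (σ : ℕ → G) : ℕ → ℕ → G
  | _, 0 => 1
  | j, n + 1 => descChain σ (j + 1) n * σ j

theorem strandCopy_add (X : E) (j n : ℕ) :
    strandCopy σ X (j + n) = conjHom (descChain σ j n) (strandCopy σ X j) := by
  induction n generalizing j with
  | zero => simp [descChain, conjHom_apply]
  | succ n ih => rw [descChain, conjHom_mul_apply, ← strandCopy_succ, ← ih, Nat.add_right_comm]; rfl

theorem commute_descChain {W : E} {j n : ℕ}
    (hW : ∀ i, j ≤ i → i < j + n → Commute (σ i : E) W) : Commute (↑(descChain σ j n : Eˣ)) W := by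
  induction n generalizing j with
  | zero => exact Commute.one_left W
  | succ n ih =>
    rw [descChain, Units.val_mul]
    exact (ih fun i hji hin => hW i (by omega) (by omega)).mul_left (hW j le_rfl (by omega))

theorem descChain_mul_eq_smul {c : 𝕜} {j n : ℕ}
    (hZ : ∀ i, j ≤ i → i < j + n → σ i * Z = c • Z) : descChain σ j n * Z = c ^ n • Z := by
  induction n generalizing j with
  | zero => simp [descChain]
  | succ n ih =>
    rw [descChain, Units.val_mul, mul_assoc, hZ j le_rfl (by omega), mul_smul_comm,
      ih fun i hji hin => hZ i (by omega) (by omega), smul_smul, pow_succ']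

theorem IsSkew.strandCopy_mul (hq : q ≠ 0) {k : ℕ} (hZ : IsSkew σ q (k + 1) Z) (X : E) :
    strandCopy σ X k * Z = (-q) ^ k • (descChain σ 0 k * (X * Z)) := by
  have hρ : descChain σ 0 k * Z = (-q⁻¹) ^ k • Z :=
    descChain_mul_eq_smul fun i _ hi => hZ i (by omega)
  have hρ' := units_inv_mul_eq_smul (pow_ne_zero k (neg_ne_zero.2 (inv_ne_zero hq))) hρ
  rw [← inv_pow, inv_neg, inv_inv] at hρ'
  have hcopy : strandCopy σ X k = conjHom (descChain σ 0 k) X := by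
    simpa only [zero_add, strandCopy] using strandCopy_add X 0 k
  rw [hcopy, conjHom_apply, mul_assoc, hρ', mul_smul_comm, mul_assoc]

theorem ReflectionRel.mul_inv_mul_mul {s : Eˣ} (hq : q ≠ 0) (h : ReflectionRel s⁻¹ Y)
    (hZ : s * Z = (-q⁻¹) • Z) :
    Y * (↑s⁻¹ * (Y * Z)) = (-q) • (conjHom s Y * (Y * Z)) := by
  have hc : Commute (s : E) (Y * (↑s⁻¹ * Y * s)) := by
    simpa [conjHom_apply] using h.commute_mul_conj.units_inv_left
  have hsZ : ↑s⁻¹ * Z = (-q) • Z := by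
    simpa using units_inv_mul_eq_smul (neg_ne_zero.2 (inv_ne_zero hq)) hZ
  have hYY : Y * ↑s⁻¹ * Y = Y * (↑s⁻¹ * Y * s) * ↑s⁻¹ := by
    simp only [mul_assoc, Units.mul_inv, mul_one]
  have hcancel : conjHom s Y * Y = Y * (↑s⁻¹ * Y * s) := by
    calc conjHom s Y * Y = s * (Y * ↑s⁻¹ * Y) := by simp only [conjHom_apply, mul_assoc]
      _ = _ := by rw [hYY, ← mul_assoc, hc.eq, mul_assoc, Units.mul_inv, mul_one]
  rw [← mul_assoc, ← mul_assoc, hYY, ← mul_assoc (conjHom s Y), hcancel, mul_assoc, hsZ,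
    mul_smul_comm]

theorem strandCopy_mul_descChain_mul (hq : q ≠ 0) (hσ : IsBraidFamily m σ)
    (hY : IsFirstStrand m σ Y)
    (hYY : ∀ j, j + 1 < m → ReflectionRel (σ j)⁻¹ (strandCopy σ Y j))
    (hXY : ∀ j, j + 1 < m → PermutationRel (σ j) (strandCopy σ X j) (strandCopy σ Y j))
    {j n : ℕ} (hjn : j + n + 1 < m) (hZ : IsSkew σ q (j + n + 2) Z) :
    strandCopy σ Y j * (descChain σ j (n + 1) * (strandCopy σ X j * (downProd σ Y (j + 1) * Z)))
      = (-q) • (descChain σ (j + 1) n * (strandCopy σ X (j + 1) * (downProd σ Y (j + 2) * Z)))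
        + (-q⁻¹) ^ n • (downProd σ Y (j + 1) * Z) := by
  set x := strandCopy σ X j
  set y := strandCopy σ Y j
  have hρ : Commute (↑(descChain σ (j + 1) n : Eˣ)) y := commute_descChain fun i hji hin =>
    hσ.commute_strandCopy_of_lt hY hji (by omega)
  have hρZ : descChain σ (j + 1) n * (downProd σ Y (j + 1) * Z)
      = (-q⁻¹) ^ n • (downProd σ Y (j + 1) * Z) :=
    descChain_mul_eq_smul fun i hji hin =>
      hZ.mul_of_commute (by omega) (hσ.commute_downProd hY hji (by omega))
  have hyy : y * (↑(σ j)⁻¹ * (downProd σ Y (j + 1) * Z)) = (-q) • (downProd σ Y (j + 2) * Z) := by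
    rw [downProd_succ (j + 1), downProd_succ j, mul_assoc, mul_assoc, mul_assoc]
    exact (hYY j (by omega)).mul_inv_mul_mul hq
      (hZ.mul_of_commute (by omega) (hσ.commute_downProd hY le_rfl (by omega)))
  have hyx : y * σ j * x = strandCopy σ X (j + 1) * (y * ↑(σ j)⁻¹) + 1 := by
    rw [strandCopy_succ, conjHom_apply, ← mul_assoc]
    exact hXY j (by omega)
  calc y * (descChain σ j (n + 1) * (x * (downProd σ Y (j + 1) * Z)))
      = y * descChain σ (j + 1) n * (σ j * (x * (downProd σ Y (j + 1) * Z))) := by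
        simp only [descChain, Units.val_mul, mul_assoc]
    _ = descChain σ (j + 1) n * (y * σ j * x * (downProd σ Y (j + 1) * Z)) := by
        rw [← hρ.eq]; simp only [mul_assoc]
    _ = descChain σ (j + 1) n
            * (strandCopy σ X (j + 1) * (y * (↑(σ j)⁻¹ * (downProd σ Y (j + 1) * Z))))
          + descChain σ (j + 1) n * (downProd σ Y (j + 1) * Z) := by
        rw [hyx, add_mul, one_mul, mul_add]; simp only [mul_assoc]
    _ = _ := by rw [hyy, hρZ, mul_smul_comm, mul_smul_comm]

theorem downProd_mul_strandCopy_mul (hq : q ≠ 0) (hσ : IsBraidFamily m σ)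
    (hY : IsFirstStrand m σ Y)
    (hYY : ∀ j, j + 1 < m → ReflectionRel (σ j)⁻¹ (strandCopy σ Y j))
    (hXY : ∀ j, j + 1 < m → PermutationRel (σ j) (strandCopy σ X j) (strandCopy σ Y j))
    {j n : ℕ} (hjn : j + n < m) (hZ : IsSkew σ q (j + n + 1) Z) :
    downProd σ Y j * (strandCopy σ (X * Y) (j + n) * Z)
      = (-q) ^ (j + n + j)
          • (descChain σ j n * (strandCopy σ X j * (downProd σ Y (j + 1) * Z)))
        - (∑ i ∈ Finset.range j, q ^ (2 * i + 1)) • (downProd σ Y j * Z) := by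
  induction j generalizing n with
  | zero =>
    simp only [zero_add] at hZ ⊢
    simp [hZ.strandCopy_mul hq, downProd_succ, downProd_zero, strandCopy, mul_assoc]
  | succ j ih =>
    have hpow : (-q) ^ (j + 1 + n + j) * -q = (-q) ^ (j + 1 + n + (j + 1)) := by ring
    have hconst : (-q) ^ (j + 1 + n + j) * (-q⁻¹) ^ n = -q ^ (2 * j + 1) := by
      rw [show j + 1 + n + j = n + (2 * j + 1) by omega, pow_add, mul_right_comm, ← mul_pow,
        neg_mul_neg, mul_inv_cancel₀ hq, one_pow, one_mul, Odd.neg_pow ⟨j, rfl⟩]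
    rw [downProd_succ, mul_assoc, show j + 1 + n = j + (n + 1) by omega,
      ih (by omega) (hZ.mono (by omega)), mul_sub, mul_smul_comm,
      strandCopy_mul_descChain_mul hq hσ hY hYY hXY (by omega) (hZ.mono (by omega))]
    rw [show j + (n + 1) = j + 1 + n by omega, mul_smul_comm,
      ← mul_assoc (strandCopy σ Y j), ← downProd_succ,
      Finset.sum_range_succ, smul_add, smul_smul, smul_smul, hpow, hconst, add_smul, neg_smul,
      sub_add_eq_sub_sub_swap, ← sub_eq_add_neg]

/-- The product `X_0 (X_1 + q) (X_2 + q + q³) ⋯ (X_{n-1} + q + q³ + ⋯ + q^{2n-3})`. -/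
def capelliProd (σ : ℕ → Eˣ) (q : 𝕜) (X : E) (n : ℕ) : E :=
  ((List.range n).map fun i =>
    strandCopy σ X i + (∑ j ∈ Finset.range i, q ^ (2 * j + 1)) • (1 : E)).prod

theorem capelliProd_succ (n : ℕ) :
    capelliProd σ q X (n + 1) = capelliProd σ q X n *
      (strandCopy σ X n + (∑ j ∈ Finset.range n, q ^ (2 * j + 1)) • (1 : E)) := by
  simp [capelliProd, List.range_succ]

theorem capelliProd_mul_eq (hq : q ≠ 0) (hσ : IsBraidFamily m σ)
    (hX : IsFirstStrand m σ X) (hY : IsFirstStrand m σ Y)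
    (hYY : ∀ j, j + 1 < m → ReflectionRel (σ j)⁻¹ (strandCopy σ Y j))
    (hXY : ∀ j, j + 1 < m → PermutationRel (σ j) (strandCopy σ X j) (strandCopy σ Y j))
    {k : ℕ} (hk : k ≤ m) (hZ : IsSkew σ q k Z) :
    capelliProd σ q (X * Y) k * Z
      = q ^ (k * (k - 1)) • (upProd σ X k * (downProd σ Y k * Z)) := by
  induction k generalizing Z with
  | zero => simp [capelliProd, upProd, downProd]
  | succ k ih =>
    set c := ∑ j ∈ Finset.range k, q ^ (2 * j + 1)
    have hfactor : IsSkew σ q k ((strandCopy σ (X * Y) k + c • 1) * Z) := fun i hi =>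
      hZ.mul_of_commute (by omega) <| (hσ.commute_strandCopy_of_succ_lt (hX.mul hY) hi hk).add_right
        ((Commute.one_right _).smul_right c)
    have hlast := downProd_mul_strandCopy_mul (n := 0) hq hσ hY hYY hXY hk hZ
    have hpow : q ^ (k * (k - 1)) * (-q) ^ (k + k) = q ^ ((k + 1) * (k + 1 - 1)) := by
      rw [Even.neg_pow ⟨k, rfl⟩, ← pow_add]
      congr 1
      cases k with
      | zero => rfl
      | succ k => simp only [Nat.add_sub_cancel]; ring
    simp only [add_zero, descChain, Units.val_one, one_mul] at hlast
    rw [capelliProd_succ, mul_assoc, ih (by omega) hfactor, add_mul, smul_mul_assoc, one_mul,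
      mul_add, hlast, mul_smul_comm, sub_add_cancel, mul_smul_comm, smul_smul, hpow, upProd_succ,
      mul_assoc]

end SkewVectors

section SkewSymmetrizers

theorem qNum_zero (q : ℂ) : qNum q 0 = 0 := by
  simp [qNum]

theorem sub_inv_ne_zero {q : ℂ} (hq0 : q ≠ 0) (hq1 : q ≠ 1) (hqm1 : q ≠ -1) : q - q⁻¹ ≠ 0 := by
  intro h
  refine sq_ne_one_iff.2 ⟨hq1, hqm1⟩ ?_
  rw [sq]
  nth_rw 2 [sub_eq_zero.1 h]
  exact mul_inv_cancel₀ hq0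

theorem pow_add_inv_mul_qNum {q : ℂ} (hq0 : q ≠ 0) (hq : q - q⁻¹ ≠ 0) (j : ℕ) :
    q ^ j + q⁻¹ * qNum q j = qNum q (j + 1) := by
  rw [qNum, qNum, eq_div_iff hq, add_mul, mul_assoc, div_mul_cancel₀ _ hq]
  simp only [inv_pow]
  field_simp
  ring

theorem pow_mul_qNum {q : ℂ} (hq0 : q ≠ 0) (hq : q - q⁻¹ ≠ 0) (k : ℕ) :
    q ^ k * qNum q k = ∑ i ∈ Finset.range k, q ^ (2 * i + 1) := by
  induction k with
  | zero => simp [qNum_zero]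
  | succ k ih =>
    rw [Finset.sum_range_succ, ← ih, ← pow_add_inv_mul_qNum hq0 hq]
    field_simp
    ring

variable {E : Type*} [Ring E] [Algebra ℂ E] {r : ℕ → E} {q : ℂ} {m : ℕ}

/-- The skew-symmetrizers `A^(j)` attached to a sequence `r` of crossings. -/
def skewSymmetrizer (r : ℕ → E) (q : ℂ) : ℕ → E
  | 0 => 1
  | 1 => 1
  | j + 2 => (qNum q (j + 2))⁻¹ • (skewSymmetrizer r q (j + 1) *
      (q ^ (j + 1) • (1 : E) - qNum q (j + 1) • r j) * skewSymmetrizer r q (j + 1))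

theorem skewSymmetrizer_succ_succ (r : ℕ → E) (q : ℂ) (j : ℕ) :
    skewSymmetrizer r q (j + 2) = (qNum q (j + 2))⁻¹ • (skewSymmetrizer r q (j + 1) *
      (q ^ (j + 1) • (1 : E) - qNum q (j + 1) • r j) * skewSymmetrizer r q (j + 1)) := rfl

theorem commute_skewSymmetrizer {W : E} {j : ℕ} (hW : ∀ i, i + 1 < j → Commute W (r i)) :
    Commute W (skewSymmetrizer r q j) := by
  induction j with
  | zero => exact Commute.one_right W
  | succ j ih =>
    cases j with
    | zero => exact Commute.one_right W
    | succ j =>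
      have hprev : Commute W (skewSymmetrizer r q (j + 1)) := ih fun i hi => hW i (by omega)
      have hmid : Commute W (q ^ (j + 1) • (1 : E) - qNum q (j + 1) • r j) :=
        ((Commute.one_right W).smul_right _).sub_right ((hW j (by omega)).smul_right _)
      exact ((hprev.mul_right hmid).mul_right hprev).smul_right _

theorem map_skewSymmetrizer {F : Type*} [Ring F] [Algebra ℂ F] (φ : E →ₐ[ℂ] F) (r : ℕ → E)
    (q : ℂ) (j : ℕ) : φ (skewSymmetrizer r q j) = skewSymmetrizer (fun i => φ (r i)) q j := by
  induction j using Nat.twoStepInduction with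
  | zero => exact map_one φ
  | one => exact map_one φ
  | more j _ ih =>
    simp only [skewSymmetrizer_succ_succ, map_smul, map_mul, map_sub, map_one, ih]

theorem skewSymmetrizer_mul_succ {j : ℕ} (hidem : IsIdempotentElem (skewSymmetrizer r q (j + 1))) :
    skewSymmetrizer r q (j + 1) * skewSymmetrizer r q (j + 2) = skewSymmetrizer r q (j + 2) := by
  rw [skewSymmetrizer_succ_succ, mul_smul_comm, ← mul_assoc, ← mul_assoc, hidem]

theorem isIdempotentElem_skewSymmetrizer_succ (hq0 : q ≠ 0) (hq : q - q⁻¹ ≠ 0) {j : ℕ}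
    (hj : qNum q (j + 2) ≠ 0) (hidem : IsIdempotentElem (skewSymmetrizer r q (j + 1)))
    (hskew : r j * skewSymmetrizer r q (j + 2) = (-q⁻¹) • skewSymmetrizer r q (j + 2)) :
    IsIdempotentElem (skewSymmetrizer r q (j + 2)) := by
  have hmul := skewSymmetrizer_mul_succ hidem
  have hscalar : q ^ (j + 1) - qNum q (j + 1) * -q⁻¹ = qNum q (j + 2) := by
    rw [← pow_add_inv_mul_qNum hq0 hq (j + 1)]; ring
  rw [IsIdempotentElem]
  nth_rw 1 [skewSymmetrizer_succ_succ]
  rw [smul_mul_assoc, mul_assoc, mul_assoc, hmul, sub_mul, smul_mul_assoc, one_mul, smul_mul_assoc,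
    hskew, smul_smul, ← sub_smul, hscalar, mul_smul_comm, hmul, inv_smul_smul₀ hj]

/-- Here `B` and `A` are consecutive skew-symmetrizers and `t`, `s` the crossings entering the
recursion that defines `A` and its successor. -/
theorem add_mul_sandwich_eq_zero {A B s t : E} {c Q d : ℂ} (hA : c • A = Q • B - d • (B * t * B))
    (hidem : IsIdempotentElem A) (hBA : B * A = A) (hsB : Commute s B)
    (htA : t * A = (-q⁻¹) • A) (hbraid : s * t * s = t * s * t)
    (hHecke : (q⁻¹ • 1 + s) * (q • 1 - s) = 0) :
    (q⁻¹ • 1 + s) * (A * ((q * Q) • (1 : E) - c • s) * A) = 0 := by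
  have hAsA : c • (A * s * A) = Q • (s * A) - d • (B * (t * s) * A) := by
    have hBsA : B * (s * A) = s * A := by rw [← mul_assoc, ← hsB.eq, mul_assoc, hBA]
    calc c • (A * s * A) = c • A * (s * A) := by rw [smul_mul_assoc, mul_assoc]
      _ = Q • (B * (s * A)) - d • (B * t * (B * (s * A))) := by
        rw [hA, sub_mul, smul_mul_assoc, smul_mul_assoc, mul_assoc (B * t)]
      _ = _ := by rw [hBsA]; simp only [mul_assoc]
  have hsplit : A * ((q * Q) • (1 : E) - c • s) * A
      = Q • ((q • 1 - s) * A) + d • (B * (t * s) * A) := by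
    rw [mul_sub, sub_mul, mul_smul_comm, mul_smul_comm, smul_mul_assoc, smul_mul_assoc, mul_one,
      hidem, hAsA, sub_mul, smul_mul_assoc, one_mul, smul_sub, smul_smul, mul_comm q]
    abel
  have hfactor : Commute (q⁻¹ • 1 + s) B :=
    ((Commute.one_left B).smul_left _).add_left hsB
  have hts : (q⁻¹ • 1 + s) * (t * s * A) = 0 := by
    rw [add_mul, ← mul_assoc s, ← mul_assoc s, hbraid, mul_assoc _ t A, htA, mul_smul_comm,
      smul_mul_assoc, one_mul, neg_smul, add_neg_cancel]
  rw [hsplit, mul_add, mul_smul_comm, mul_smul_comm, ← mul_assoc, hHecke, zero_mul, smul_zero,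
    zero_add, mul_assoc B, ← mul_assoc _ B, hfactor.eq, mul_assoc, hts, mul_zero, smul_zero]

theorem hecke_mul_comm {s : E} (h : (q • 1 - s) * (q⁻¹ • 1 + s) = 0) :
    (q⁻¹ • 1 + s) * (q • 1 - s) = 0 := by
  have hc : Commute (q • 1 - s) (q⁻¹ • 1 + s) :=
    ((Commute.one_left _).smul_left _).sub_left
      (((Commute.one_right s).smul_right _).add_right (Commute.refl s))
  rw [← hc.eq, h]

theorem add_mul_skewSymmetrizer_eq_zero (hq0 : q ≠ 0) (hq : q - q⁻¹ ≠ 0) (hr : IsBraidFamily m r)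
    (hHecke : ∀ i, i + 1 < m → (q • 1 - r i) * (q⁻¹ • 1 + r i) = 0)
    (hqNum : ∀ j, 2 ≤ j → j ≤ m → qNum q j ≠ 0) {j : ℕ} (hj : j + 2 ≤ m)
    (hidem : IsIdempotentElem (skewSymmetrizer r q j))
    (hidem' : IsIdempotentElem (skewSymmetrizer r q (j + 1)))
    (hskew : ∀ i, i + 1 < j + 1 →
      r i * skewSymmetrizer r q (j + 1) = (-q⁻¹) • skewSymmetrizer r q (j + 1)) :
    (q⁻¹ • 1 + r j) * skewSymmetrizer r q (j + 2) = 0 := by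
  have hHecke' := hecke_mul_comm (hHecke j hj)
  rw [skewSymmetrizer_succ_succ, mul_smul_comm]
  cases j with
  | zero =>
    have hone : qNum q 1 = 1 := by simpa [qNum_zero] using (pow_add_inv_mul_qNum hq0 hq 0).symm
    simp only [skewSymmetrizer, one_mul, mul_one, zero_add, pow_one, hone, one_smul, hHecke',
      smul_zero]
  | succ j =>
    have hrec : qNum q (j + 2) • skewSymmetrizer r q (j + 2)
        = q ^ (j + 1) • skewSymmetrizer r q (j + 1)
          - qNum q (j + 1) • (skewSymmetrizer r q (j + 1) * r j * skewSymmetrizer r q (j + 1)) := by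
      rw [skewSymmetrizer_succ_succ, smul_inv_smul₀ (hqNum _ (by omega) (by omega)), mul_sub,
        sub_mul, mul_smul_comm, mul_one, smul_mul_assoc, hidem, mul_smul_comm, smul_mul_assoc]
    have hcomm : Commute (r (j + 1)) (skewSymmetrizer r q (j + 1)) :=
      commute_skewSymmetrizer fun i hi => (hr.commute i (j + 1) (by omega) hj).symm
    rw [pow_succ', add_mul_sandwich_eq_zero hrec hidem' (skewSymmetrizer_mul_succ hidem) hcomm
      (hskew j (by omega)) (hr.braid j hj).symm hHecke', smul_zero]

theorem isIdempotentElem_and_mul_skewSymmetrizer (hq0 : q ≠ 0) (hq : q - q⁻¹ ≠ 0)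
    (hr : IsBraidFamily m r) (hHecke : ∀ i, i + 1 < m → (q • 1 - r i) * (q⁻¹ • 1 + r i) = 0)
    (hqNum : ∀ j, 2 ≤ j → j ≤ m → qNum q j ≠ 0) {j : ℕ} (hj : j ≤ m) :
    IsIdempotentElem (skewSymmetrizer r q j) ∧
      ∀ i, i + 1 < j → r i * skewSymmetrizer r q j = (-q⁻¹) • skewSymmetrizer r q j := by
  induction j using Nat.twoStepInduction with
  | zero => exact ⟨IsIdempotentElem.one, fun i hi => by omega⟩
  | one => exact ⟨IsIdempotentElem.one, fun i hi => by omega⟩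
  | more j ih ih' =>
    obtain ⟨hidem, -⟩ := ih (by omega)
    obtain ⟨hidem', hskew⟩ := ih' (by omega)
    have hlast : r j * skewSymmetrizer r q (j + 2) = (-q⁻¹) • skewSymmetrizer r q (j + 2) := by
      have h := add_mul_skewSymmetrizer_eq_zero hq0 hq hr hHecke hqNum hj hidem hidem' hskew
      rw [add_mul, smul_mul_assoc, one_mul] at h
      rw [neg_smul]
      exact (neg_eq_of_add_eq_zero_right h).symm
    refine ⟨isIdempotentElem_skewSymmetrizer_succ hq0 hq (hqNum _ (by omega) hj) hidem' hlast,
      fun i hi => ?_⟩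
    obtain hi | rfl := Nat.lt_succ_iff_lt_or_eq.1 (Nat.succ_lt_succ_iff.1 hi)
    · rw [← skewSymmetrizer_mul_succ hidem', ← mul_assoc, hskew i (by omega), smul_mul_assoc]
    · exact hlast

end SkewSymmetrizers

section Windows

variable {κ κ' τ α A : Type*}

/-- Splitting a function on `τ` into its restrictions to the image of `κ` and to the complement. -/
def splitEquiv (ι : κ ↪ τ) (α : Type*) [DecidablePred (· ∈ Set.range ι)] :
    (τ → α) ≃ (κ → α) × ({t // t ∉ Set.range ι} → α) :=
  (Equiv.piEquivPiSubtypeProd (· ∈ Set.range ι) fun _ => α).trans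
    (Equiv.prodCongr ((Equiv.ofInjective ι ι.injective).symm.arrowCongr (Equiv.refl α))
      (Equiv.refl _))

theorem splitEquiv_apply (ι : κ ↪ τ) [DecidablePred (· ∈ Set.range ι)] (f : τ → α) :
    splitEquiv ι α f = (f ∘ ι, fun t => f t.1) := rfl

/-- The tensor power of `C`, one factor for each element of `τ`. -/
def tensorPow (τ : Type*) [Fintype τ] (C : Matrix α α ℂ) : Matrix (τ → α) (τ → α) ℂ :=
  of fun f g => ∏ t, C (f t) (g t)

theorem tensorPow_eq_reindex [Fintype κ] [Fintype τ] [DecidableEq τ] (ι : κ ↪ τ)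
    (C : Matrix α α ℂ) :
    tensorPow τ C = reindex (splitEquiv ι α).symm (splitEquiv ι α).symm
      (tensorPow κ C ⊗ₖ tensorPow {t // t ∉ Set.range ι} C) := by
  ext f g
  simp only [tensorPow, of_apply, reindex_apply, submatrix_apply, Equiv.symm_symm,
    splitEquiv_apply, kroneckerMap_apply, Function.comp_apply]
  rw [← Fintype.prod_subtype_mul_prod_subtype (· ∈ Set.range ι)]
  congr 1
  convert (Fintype.prod_equiv (Equiv.ofInjective ι ι.injective) (fun x => C (f (ι x)) (g (ι x)))
    (fun t => C (f t) (g t)) fun _ => rfl).symm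

variable [Fintype κ] [Fintype κ'] [Fintype τ] [Fintype α] [DecidableEq κ] [DecidableEq κ']
  [DecidableEq τ] [DecidableEq α] [Ring A] [Algebra ℂ A]

/-- The operator `X` on the tensor factors indexed by `κ`, extended by the identity to an operator
on the tensor factors indexed by `τ`. -/
def windowHom (ι : κ ↪ τ) :
    Matrix (κ → α) (κ → α) A →ₐ[ℂ] Matrix (τ → α) (τ → α) A :=
  (reindexAlgEquiv ℂ A (splitEquiv ι α).symm : _ →ₐ[ℂ] _).comp
    { (blockDiagonalRingHom (κ → α) ({t // t ∉ Set.range ι} → α) A).comp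
        (Pi.constRingHom _ _) with
      commutes' := fun c => by
        ext ⟨a, b⟩ ⟨a', b'⟩
        by_cases hb : b = b' <;> by_cases ha : a = a' <;>
          simp [algebraMap_matrix_apply, blockDiagonal_apply, ha, hb] }

theorem windowHom_eq_reindex (ι : κ ↪ τ) (X : Matrix (κ → α) (κ → α) A) :
    windowHom ι X = reindex (splitEquiv ι α).symm (splitEquiv ι α).symm
      (blockDiagonal fun _ => X) := rfl

theorem windowHom_apply (ι : κ ↪ τ) (X : Matrix (κ → α) (κ → α) A) (f g : τ → α) :
    windowHom ι X f g = if ∀ t ∉ Set.range ι, f t = g t then X (f ∘ ι) (g ∘ ι) else 0 := by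
  simp only [windowHom_eq_reindex, reindex_apply, submatrix_apply, Equiv.symm_symm,
    splitEquiv_apply, blockDiagonal_apply, funext_iff, Subtype.forall]

theorem map_windowHom {B : Type*} [Ring B] [Algebra ℂ B] (φ : A →+* B) (ι : κ ↪ τ)
    (X : Matrix (κ → α) (κ → α) A) :
    (windowHom ι X).map φ = windowHom ι (X.map φ) := by
  ext f g
  simp only [map_apply, windowHom_apply, apply_ite φ, map_zero]

theorem windowHom_trans (ι : κ ↪ κ') (ι' : κ' ↪ τ) (X : Matrix (κ → α) (κ → α) A) :
    windowHom (ι.trans ι') X = windowHom ι' (windowHom ι X) := by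
  ext f g
  simp only [windowHom_apply, ← ite_and, Function.comp_apply]
  refine if_congr ⟨fun h => ⟨fun t ht => h t ?_, fun s hs => h _ ?_⟩, fun h t ht => ?_⟩ rfl rfl
  · rintro ⟨x, rfl⟩
    exact ht ⟨ι x, rfl⟩
  · rintro ⟨x, hx⟩
    exact hs ⟨x, ι'.injective hx⟩
  · by_cases hs : t ∈ Set.range ι'
    · obtain ⟨s, rfl⟩ := hs
      exact h.2 s fun ⟨x, hx⟩ => ht ⟨x, congrArg ι' hx⟩
    · exact h.1 t hs

theorem windowHom_mul_windowHom_apply (ι : κ ↪ τ) (ι' : κ' ↪ τ)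
    (hdisj : Disjoint (Set.range ι) (Set.range ι'))
    (X : Matrix (κ → α) (κ → α) A) (Y : Matrix (κ' → α) (κ' → α) A) (f g : τ → α) :
    (windowHom ι X * windowHom ι' Y) f g =
      if ∀ t, t ∉ Set.range ι → t ∉ Set.range ι' → f t = g t then
        X (f ∘ ι) (g ∘ ι) * Y (f ∘ ι') (g ∘ ι') else 0 := by
  classical
  let h : τ → α := (Set.range ι).piecewise g f
  have hι : h ∘ ι = g ∘ ι := funext fun x => Set.piecewise_eq_of_mem _ _ _ ⟨x, rfl⟩
  have hι' : h ∘ ι' = f ∘ ι' := funext fun x =>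
    Set.piecewise_eq_of_notMem _ _ _ (Set.disjoint_right.1 hdisj ⟨x, rfl⟩)
  have hoff : ∀ t ∉ Set.range ι, f t = h t := fun t ht =>
    (Set.piecewise_eq_of_notMem _ _ _ ht).symm
  have hcond : (∀ t ∉ Set.range ι', h t = g t) ↔
      ∀ t, t ∉ Set.range ι → t ∉ Set.range ι' → f t = g t := by
    refine ⟨fun H t ht ht' => (hoff t ht).trans (H t ht'), fun H t ht' => ?_⟩
    by_cases ht : t ∈ Set.range ι
    · exact Set.piecewise_eq_of_mem _ _ _ ht
    · exact (hoff t ht).symm.trans (H t ht ht')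
  rw [mul_apply, Finset.sum_eq_single h]
  · rw [windowHom_apply, windowHom_apply, if_pos hoff, hι, hι', mul_ite, mul_zero]
    exact if_congr hcond rfl rfl
  · intro h' _ hne
    simp only [windowHom_apply, ite_mul, mul_ite, zero_mul, mul_zero, ← ite_and]
    refine if_neg fun ⟨H', H⟩ => hne (funext fun t => ?_)
    by_cases ht : t ∈ Set.range ι
    · exact (H' t (Set.disjoint_left.1 hdisj ht)).trans (Set.piecewise_eq_of_mem _ _ _ ht).symm
    · exact (H t ht).symm.trans (hoff t ht)
  · exact fun hnot => absurd (Finset.mem_univ h) hnot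

theorem commute_windowHom (ι : κ ↪ τ) (ι' : κ' ↪ τ)
    (hdisj : Disjoint (Set.range ι) (Set.range ι'))
    {X : Matrix (κ → α) (κ → α) A} {Y : Matrix (κ' → α) (κ' → α) A}
    (hXY : ∀ a b c d, Commute (X a b) (Y c d)) :
    Commute (windowHom ι X) (windowHom ι' Y) := by
  ext f g
  rw [windowHom_mul_windowHom_apply ι ι' hdisj, windowHom_mul_windowHom_apply ι' ι hdisj.symm,
    (hXY _ _ _ _).eq]
  exact if_congr ⟨fun H t h h' => H t h' h, fun H t h h' => H t h' h⟩ rfl rfl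

theorem commute_tensorPow_windowHom (ι : κ ↪ τ) {C : Matrix α α ℂ}
    {X : Matrix (κ → α) (κ → α) ℂ} (hX : Commute (tensorPow κ C) X) :
    Commute (tensorPow τ C) (windowHom ι X) := by
  rw [tensorPow_eq_reindex ι, windowHom_eq_reindex, ← kronecker_one]
  refine Commute.map ?_ (reindexAlgEquiv ℂ ℂ (splitEquiv ι α).symm)
  rw [Commute, SemiconjBy, ← mul_kronecker_mul, ← mul_kronecker_mul, hX.eq, one_mul, mul_one]

end Windows

section TensorSpaces

variable {N k : ℕ} {A : Type*} [Ring A] [Algebra ℂ A]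

/-- An operator on `ℂ^N ⊗ ℂ^N`, viewed as acting on the second tensor power. -/
def twoSite : RMat N ≃ₐ[ℂ] TMat N 2 ℂ :=
  reindexAlgEquiv ℂ ℂ (finTwoArrowEquiv (Fin N)).symm

/-- A matrix of size `N`, viewed as acting on the first tensor power. -/
def oneSite : Matrix (Fin N) (Fin N) A ≃ₐ[ℂ] TMat N 1 A :=
  reindexAlgEquiv ℂ A (Equiv.funUnique (Fin 1) (Fin N)).symm

/-- The embedding of `w` consecutive tensor factors, starting at the factor `i`. -/
def blockEmb {w k : ℕ} (i : ℕ) (h : i + w ≤ k) : Fin w ↪ Fin k :=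
  (Fin.natAddEmb i).trans (Fin.castLEEmb h)

theorem coe_blockEmb {w k i : ℕ} (h : i + w ≤ k) (x : Fin w) : (blockEmb i h x : ℕ) = i + x := rfl

theorem notMem_range_blockEmb {w k i : ℕ} (h : i + w ≤ k) (t : Fin k) :
    t ∉ Set.range (blockEmb i h) ↔ ∀ x < w, (t : ℕ) ≠ i + x := by
  refine ⟨fun ht x hx htx => ht ⟨⟨x, hx⟩, Fin.ext htx.symm⟩, ?_⟩
  rintro ht ⟨x, rfl⟩
  exact ht x x.2 rfl

theorem blockEmb_trans {v w k i j : ℕ} (h : i + w ≤ k) (h' : j + v ≤ w) :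
    (blockEmb j h').trans (blockEmb i h) = blockEmb (i + j) (by omega) := by
  ext x
  simp only [Function.Embedding.trans_apply, coe_blockEmb, add_assoc]

theorem embR_eq_windowHom (R : RMat N) {i : ℕ} (h : i + 2 ≤ k) :
    embR k R i = windowHom (blockEmb i h) (twoSite R) := by
  ext f g
  have hrange (t : Fin k) : t ∉ Set.range (blockEmb i h) ↔ (t : ℕ) ≠ i ∧ (t : ℕ) ≠ i + 1 := by
    rw [notMem_range_blockEmb]
    exact ⟨fun ht => ⟨ht 0 two_pos, ht 1 one_lt_two⟩, fun ht x hx => by omega⟩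
  simp only [windowHom_apply, hrange, and_imp, embR, dif_pos (show i + 1 < k from h)]
  rfl

theorem embR_eq_one (R : RMat N) {i : ℕ} (h : ¬ i + 2 ≤ k) : embR k R i = 1 := by
  ext f g
  rw [embR, dif_neg (show ¬ i + 1 < k from h)]

theorem emb1_eq_windowHom (X : Matrix (Fin N) (Fin N) A) (h : 0 + 1 ≤ k) :
    emb1 k X = windowHom (blockEmb 0 h) (oneSite X) := by
  ext f g
  have hrange (t : Fin k) : t ∉ Set.range (blockEmb 0 h) ↔ (t : ℕ) ≠ 0 := by
    rw [notMem_range_blockEmb]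
    exact ⟨fun ht => ht 0 one_pos, fun h0 x hx => by omega⟩
  simp only [windowHom_apply, hrange, emb1, dif_pos (show 0 < k by omega)]
  rfl

theorem windowHom_embR (R : RMat N) {w i j : ℕ} (h : i + w ≤ k) (hj : j + 2 ≤ w) :
    windowHom (blockEmb i h) (embR w R j) = embR k R (i + j) := by
  rw [embR_eq_windowHom R hj, ← windowHom_trans, blockEmb_trans, ← embR_eq_windowHom]

theorem windowHom_emb1 (X : Matrix (Fin N) (Fin N) A) {w : ℕ} (h : 0 + w ≤ k) (hw : 0 + 1 ≤ w) :
    windowHom (blockEmb 0 h) (emb1 w X) = emb1 k X := by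
  rw [emb1_eq_windowHom X hw, ← windowHom_trans, blockEmb_trans, emb1_eq_windowHom]

theorem emb1_mul (X Y : Matrix (Fin N) (Fin N) A) : emb1 k (X * Y) = emb1 k X * emb1 k Y := by
  rcases Nat.eq_zero_or_pos k with rfl | hk
  · have hone (Z : Matrix (Fin N) (Fin N) A) : emb1 0 Z = 1 := rfl
    rw [hone, hone, hone, one_mul]
  · have hk' : 0 + 1 ≤ k := by omega
    rw [emb1_eq_windowHom _ hk', emb1_eq_windowHom _ hk', emb1_eq_windowHom _ hk', map_mul, map_mul]

/-- `embR` as a monoid homomorphism. It is not additive when `k ≤ i + 1`, where it is constantly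
equal to `1`. -/
def embRHom (N k i : ℕ) : RMat N →* TMat N k ℂ where
  toFun R := embR k R i
  map_one' := by
    by_cases h : i + 2 ≤ k
    · rw [embR_eq_windowHom _ h, map_one, map_one]
    · exact embR_eq_one 1 h
  map_mul' R S := by
    by_cases h : i + 2 ≤ k
    · rw [embR_eq_windowHom _ h, embR_eq_windowHom _ h, embR_eq_windowHom _ h, map_mul, map_mul]
    · rw [embR_eq_one _ h, embR_eq_one _ h, embR_eq_one _ h, one_mul]

/-- `liftC` as an algebra homomorphism. -/
def liftHom (N k : ℕ) (A : Type*) [Ring A] [Algebra ℂ A] : TMat N k ℂ →ₐ[ℂ] TMat N k A :=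
  (Algebra.ofId ℂ A).mapMatrix

/-- The crossing `R_{i+1}` of the tensor factors `i` and `i + 1`, with entries in `A`. -/
def crossing (A : Type*) [Ring A] [Algebra ℂ A] (k : ℕ) (R : (RMat N)ˣ) (i : ℕ) : (TMat N k A)ˣ :=
  Units.map ((liftHom N k A : TMat N k ℂ →* TMat N k A).comp (embRHom N k i)) R

theorem isBraidFamily_embR {R : RMat N} (hR : IsBraiding R) : IsBraidFamily k (embR k R) where
  braid i hi := by
    have h3 : i + 3 ≤ k := hi
    have h := congrArg (windowHom (blockEmb i h3)) hR
    simpa only [map_mul, windowHom_embR R h3 (show 0 + 2 ≤ 3 by norm_num), add_zero,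
      windowHom_embR R h3 (show 1 + 2 ≤ 3 by norm_num)] using h
  commute i j hij hj := by
    rw [embR_eq_windowHom R (show i + 2 ≤ k by omega),
      embR_eq_windowHom R (show j + 2 ≤ k by omega)]
    refine commute_windowHom _ _ (Set.disjoint_right.2 ?_) fun _ _ _ _ => Commute.all _ _
    rintro _ ⟨x, rfl⟩
    rw [notMem_range_blockEmb]
    intro y hy
    rw [coe_blockEmb]
    omega

theorem isBraidFamily_crossing {R : (RMat N)ˣ} (hR : IsBraiding R.val) :
    IsBraidFamily k (crossing A k R) := by
  have h := (isBraidFamily_embR (k := k) hR).map (liftHom N k A : TMat N k ℂ →* TMat N k A)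
  exact ⟨fun i hi => Units.ext (h.braid i hi), fun i j hij hj => Units.ext (h.commute i j hij hj)⟩

theorem isFirstStrand_emb1 (R : (RMat N)ˣ) (X : Matrix (Fin N) (Fin N) A) :
    IsFirstStrand k (crossing A k R) (emb1 k X) := by
  intro i h0 hi
  change Commute ((embR k R.val i).map (algebraMap ℂ A)) _
  rw [embR_eq_windowHom _ (show i + 2 ≤ k from hi), map_windowHom,
    emb1_eq_windowHom X (show 0 + 1 ≤ k by omega)]
  refine commute_windowHom _ _ (Set.disjoint_right.2 ?_) fun _ _ _ _ =>
    Algebra.commute_algebraMap_left _ _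
  rintro _ ⟨x, rfl⟩
  rw [notMem_range_blockEmb]
  intro y hy
  rw [coe_blockEmb]
  omega

theorem map_windowHom_crossing (R : (RMat N)ˣ) (hk : 0 + 2 ≤ k) :
    Units.map (windowHom (blockEmb 0 hk) : TMat N 2 A →ₐ[ℂ] TMat N k A).toMonoidHom
      (crossing A 2 R 0) = crossing A k R 0 := by
  ext1
  change windowHom _ ((embR 2 R.val 0).map (algebraMap ℂ A)) = (embR k R.val 0).map (algebraMap ℂ A)
  rw [← map_windowHom, windowHom_embR _ hk le_rfl]

theorem reflectionRel_crossing {R : (RMat N)ˣ} (hR : IsBraiding R.val)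
    {M : Matrix (Fin N) (Fin N) A} (hM : RERel R.val M) {j : ℕ} (hj : j + 1 < k) :
    ReflectionRel (crossing A k R j) (strandCopy (crossing A k R) (emb1 k M) j) := by
  have hk : 0 + 2 ≤ k := by omega
  have h2 : ReflectionRel (crossing A 2 R 0) (emb1 2 M) := hM
  have h0 : ReflectionRel (crossing A k R 0) (emb1 k M) := by
    have h := h2.map (windowHom (blockEmb 0 hk) : TMat N 2 A →ₐ[ℂ] TMat N k A).toRingHom
    rw [← map_windowHom_crossing R hk, ← windowHom_emb1 M hk one_le_two]
    exact h
  exact h0.shift (isBraidFamily_crossing hR) (isFirstStrand_emb1 R M) hj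

theorem reflectionRel_crossing_inv {R : (RMat N)ˣ} (hR : IsBraiding R.val)
    {D : Matrix (Fin N) (Fin N) A} (hD : DDRel R⁻¹.val D) {j : ℕ} (hj : j + 1 < k) :
    ReflectionRel (crossing A k R j)⁻¹ (strandCopy (crossing A k R) (emb1 k D) j) := by
  have hk : 0 + 2 ≤ k := by omega
  have h2 : ReflectionRel (crossing A 2 R 0)⁻¹ (emb1 2 D) := hD
  have h0 : ReflectionRel (crossing A k R 0)⁻¹ (emb1 k D) := by
    have h := h2.map (windowHom (blockEmb 0 hk) : TMat N 2 A →ₐ[ℂ] TMat N k A).toRingHom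
    rw [← map_windowHom_crossing R hk, ← windowHom_emb1 D hk one_le_two, ← map_inv]
    exact h
  exact h0.shift_inv (isBraidFamily_crossing hR) (isFirstStrand_emb1 R D) hj

theorem permutationRel_crossing {R : (RMat N)ˣ} (hR : IsBraiding R.val)
    {M D : Matrix (Fin N) (Fin N) A} (hMD : PermRel R.val R⁻¹.val M D) {j : ℕ} (hj : j + 1 < k) :
    PermutationRel (crossing A k R j) (strandCopy (crossing A k R) (emb1 k M) j)
      (strandCopy (crossing A k R) (emb1 k D) j) := by
  have hk : 0 + 2 ≤ k := by omega
  have h2 : PermutationRel (crossing A 2 R 0) (emb1 2 M) (emb1 2 D) := hMD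
  have h0 : PermutationRel (crossing A k R 0) (emb1 k M) (emb1 k D) := by
    have h := h2.map (windowHom (blockEmb 0 hk) : TMat N 2 A →ₐ[ℂ] TMat N k A).toRingHom
    rw [← map_windowHom_crossing R hk, ← windowHom_emb1 M hk one_le_two,
      ← windowHom_emb1 D hk one_le_two]
    exact h
  exact h0.shift (isBraidFamily_crossing hR) (isFirstStrand_emb1 R M)
    (isFirstStrand_emb1 R D) hj

theorem hecke_embR {R : RMat N} {q : ℂ} (hR : HeckeCond R q) {i : ℕ} (hi : i + 1 < k) :
    (q • 1 - embR k R i) * (q⁻¹ • 1 + embR k R i) = 0 := by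
  have h := congrArg (fun T => windowHom (blockEmb i hi) (twoSite T)) hR
  simpa only [map_mul, map_sub, map_add, map_smul, map_one, map_zero, ← embR_eq_windowHom] using h

theorem asym_eq_skewSymmetrizer (R : RMat N) (q : ℂ) (j : ℕ) :
    Asym k R q j = skewSymmetrizer (embR k R) q j := by
  induction j using Nat.twoStepInduction with
  | zero => rfl
  | one => rfl
  | more j _ ih => rw [Asym, skewSymmetrizer_succ_succ, ih]

theorem isIdempotentElem_asym {R : RMat N} {q : ℂ} (hq0 : q ≠ 0) (hq : q - q⁻¹ ≠ 0)
    (hbr : IsBraiding R) (hH : HeckeCond R q) (hqNum : ∀ j, 2 ≤ j → j ≤ k → qNum q j ≠ 0) :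
    IsIdempotentElem (Asym k R q k) := by
  rw [asym_eq_skewSymmetrizer]
  exact (isIdempotentElem_and_mul_skewSymmetrizer hq0 hq (isBraidFamily_embR hbr)
    (fun i => hecke_embR hH) hqNum le_rfl).1

theorem isSkew_liftC_asym {R : (RMat N)ˣ} {q : ℂ} (hq0 : q ≠ 0) (hq : q - q⁻¹ ≠ 0)
    (hbr : IsBraiding R.val) (hH : HeckeCond R.val q)
    (hqNum : ∀ j, 2 ≤ j → j ≤ k → qNum q j ≠ 0) :
    IsSkew (crossing A k R) q k (liftC A (Asym k R.val q k)) := by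
  intro i hi
  have h := (isIdempotentElem_and_mul_skewSymmetrizer hq0 hq (isBraidFamily_embR hbr)
    (fun i => hecke_embR hH) hqNum le_rfl).2 i hi
  rw [← asym_eq_skewSymmetrizer] at h
  have hlift := congrArg (liftHom N k A) h
  rw [map_mul, map_smul] at hlift
  exact hlift

theorem copyX_eq_strandCopy (R : (RMat N)ˣ) (X : Matrix (Fin N) (Fin N) A) (j : ℕ) :
    copyX k R.val R⁻¹.val X j = strandCopy (crossing A k R) (emb1 k X) j := by
  induction j with
  | zero => rfl
  | succ j ih => rw [copyX, ih, strandCopy_succ, conjHom_apply]; rfl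

theorem upChain_eq_upProd (R : (RMat N)ˣ) (X : Matrix (Fin N) (Fin N) A) (n : ℕ) :
    upChain k R.val R⁻¹.val X n = upProd (crossing A k R) (emb1 k X) n := by
  simp only [upChain, upProd, funext (copyX_eq_strandCopy R X)]

theorem downChain_eq_downProd (R : (RMat N)ˣ) (X : Matrix (Fin N) (Fin N) A) (n : ℕ) :
    downChain k R.val R⁻¹.val X n = downProd (crossing A k R) (emb1 k X) n := by
  simp only [downChain, downProd, funext (copyX_eq_strandCopy R X)]

theorem capChainA_eq_capelliProd (R : (RMat N)ˣ) {q : ℂ} (hq0 : q ≠ 0) (hq : q - q⁻¹ ≠ 0)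
    (X : Matrix (Fin N) (Fin N) A) (n : ℕ) :
    capChainA k R.val R⁻¹.val q X n = capelliProd (crossing A k R) q (emb1 k X) n := by
  simp only [capChainA, capelliProd, copyX_eq_strandCopy, pow_mul_qNum hq0 hq]

end TensorSpaces

section PartialTrace

variable {α β 𝕜 : Type*} [Fintype α] [CommSemiring 𝕜]

/-- The partial trace `Tr₁(C₁ Z)` over the first tensor factor, weighted by `C`. -/
def leftTrace (C : Matrix α α 𝕜) (Z : Matrix (α × β) (α × β) 𝕜) : Matrix β β 𝕜 :=
  ∑ a, ∑ x, C x a • Z.submatrix (Prod.mk a) (Prod.mk x)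

theorem leftTrace_apply (C : Matrix α α 𝕜) (Z : Matrix (α × β) (α × β) 𝕜) (b f : β) :
    leftTrace C Z b f = ∑ a, ∑ x, C x a * Z (a, b) (x, f) := by
  simp only [leftTrace, Matrix.sum_apply, Matrix.smul_apply, submatrix_apply, smul_eq_mul]

theorem sum_comm_reverse {ι₁ ι₂ ι₃ : Type*} [Fintype ι₁] [Fintype ι₂] [Fintype ι₃]
    (F : ι₁ → ι₂ → ι₃ → 𝕜) : ∑ i, ∑ j, ∑ l, F i j l = ∑ l, ∑ j, ∑ i, F i j l :=
  Finset.sum_comm.trans ((Finset.sum_congr rfl fun _ _ => Finset.sum_comm).trans Finset.sum_comm)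

theorem leftTrace_one_kronecker_mul [Fintype β] [DecidableEq α] (C : Matrix α α 𝕜)
    (S T : Matrix β β 𝕜) (Z : Matrix (α × β) (α × β) 𝕜) :
    leftTrace C (1 ⊗ₖ S * Z * 1 ⊗ₖ T) = S * leftTrace C Z * T := by
  have hblock (a x : α) :
      (1 ⊗ₖ S * Z * 1 ⊗ₖ T).submatrix (Prod.mk a) (Prod.mk x) =
        S * Z.submatrix (Prod.mk a) (Prod.mk x) * T := by
    ext b f
    simp [mul_apply, Fintype.sum_prod_type, one_apply, Finset.sum_mul]
  simp only [leftTrace, hblock, Finset.mul_sum, Finset.sum_mul, mul_smul_comm, smul_mul_assoc]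

theorem leftTrace_kronecker_mul [Fintype β] (C B : Matrix α α 𝕜)
    (D : Matrix β β 𝕜) (Z : Matrix (α × β) (α × β) 𝕜) :
    leftTrace C (B ⊗ₖ D * Z) = D * leftTrace (C * B) Z := by
  classical
  have hB : leftTrace C (B ⊗ₖ (1 : Matrix β β 𝕜) * Z) = leftTrace (C * B) Z := by
    ext b f
    simp only [leftTrace_apply, mul_apply, Fintype.sum_prod_type, kroneckerMap_apply, one_apply,
      mul_ite, ite_mul, mul_one, mul_zero, zero_mul, Finset.sum_ite_eq, Finset.mem_univ, if_true,
      Finset.mul_sum, Finset.sum_mul, mul_assoc]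
    exact sum_comm_reverse _
  calc leftTrace C (B ⊗ₖ D * Z)
      = leftTrace C (1 ⊗ₖ D * (B ⊗ₖ 1 * Z) * 1 ⊗ₖ 1) := by
        rw [one_kronecker_one, mul_one, ← mul_assoc, ← mul_kronecker_mul, one_mul, mul_one]
    _ = D * leftTrace (C * B) Z := by rw [leftTrace_one_kronecker_mul, hB, mul_one]

theorem leftTrace_mul_kronecker [Fintype β] (C B : Matrix α α 𝕜)
    (D : Matrix β β 𝕜) (Z : Matrix (α × β) (α × β) 𝕜) :
    leftTrace C (Z * B ⊗ₖ D) = leftTrace (B * C) Z * D := by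
  classical
  have hB : leftTrace C (Z * B ⊗ₖ (1 : Matrix β β 𝕜)) = leftTrace (B * C) Z := by
    ext b f
    simp only [leftTrace_apply, mul_apply, Fintype.sum_prod_type, kroneckerMap_apply, one_apply,
      mul_ite, mul_one, mul_zero, Finset.sum_ite_eq', Finset.mem_univ, if_true,
      Finset.mul_sum, Finset.sum_mul]
    refine Finset.sum_congr rfl fun a _ => Finset.sum_comm.trans ?_
    exact Finset.sum_congr rfl fun y _ => Finset.sum_congr rfl fun x _ => by ring
  calc leftTrace C (Z * B ⊗ₖ D)
      = leftTrace C (1 ⊗ₖ 1 * (Z * B ⊗ₖ 1) * 1 ⊗ₖ D) := by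
        rw [one_kronecker_one, one_mul, mul_assoc, ← mul_kronecker_mul, mul_one, one_mul]
    _ = leftTrace (B * C) Z * D := by rw [leftTrace_one_kronecker_mul, hB, one_mul]

theorem leftTrace_reindex_kronecker_one {γ : Type*} [DecidableEq γ] (C : Matrix α α 𝕜)
    (Z : Matrix (α × β) (α × β) 𝕜) :
    leftTrace C (reindex (Equiv.prodAssoc α β γ) (Equiv.prodAssoc α β γ)
      (Z ⊗ₖ 1)) = leftTrace C Z ⊗ₖ 1 := by
  ext ⟨b, u⟩ ⟨f, v⟩
  simp only [leftTrace_apply, kroneckerMap_apply, Finset.sum_mul, mul_assoc]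
  rfl

end PartialTrace

section SkewInverse

variable {N : ℕ}

/-- The realignment of a matrix on `ℂ^N ⊗ ℂ^N`. Skew-invertibility of `R` is invertibility of its
realignment. -/
def realign (X : RMat N) : RMat N :=
  of fun p r => X (p.1, r.1) (p.2, r.2)

theorem realign_mul_of_skewInv {R Ψ : RMat N} (hΨ : SkewInv R Ψ) :
    realign R * (realign Ψ).submatrix Prod.swap Prod.swap = 1 := by
  ext ⟨i, a⟩ ⟨d, c⟩
  rw [mul_apply, Fintype.sum_prod_type, one_apply]
  simpa [realign, eq_comm (a := a)] using hΨ i a c d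

theorem leftTrace_eq_vecMul_realign (C : Matrix (Fin N) (Fin N) ℂ) (X : RMat N) (b f : Fin N) :
    leftTrace C X b f = ((fun p => C p.2 p.1) ᵥ* realign X) (b, f) := by
  rw [leftTrace_apply, vecMul, dotProduct, Fintype.sum_prod_type]
  rfl

theorem leftTrace_Cmat {R Ψ : RMat N} (hΨ : SkewInv R Ψ) : leftTrace (Cmat Ψ) R = 1 := by
  have hC : (fun p : Fin N × Fin N => Cmat Ψ p.2 p.1) =
      (fun p => (1 : Matrix (Fin N) (Fin N) ℂ) p.1 p.2) ᵥ*
        (realign Ψ).submatrix Prod.swap Prod.swap := by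
    ext ⟨d, c⟩
    simp [vecMul, dotProduct, Fintype.sum_prod_type, one_apply, Cmat, realign]
  ext b f
  rw [leftTrace_eq_vecMul_realign, hC, vecMul_vecMul,
    mul_eq_one_comm.1 (realign_mul_of_skewInv hΨ), vecMul_one]

/-- Operators on the third tensor power, with the tensor factors grouped as `V ⊗ (V ⊗ V)`. -/
def tripleEquiv : TMat N 3 ℂ ≃ₐ[ℂ] Matrix (Fin N × Fin N × Fin N) (Fin N × Fin N × Fin N) ℂ :=
  reindexAlgEquiv ℂ ℂ (((Equiv.refl _).prodCongr (finTwoArrowEquiv (Fin N)).symm).trans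
    (Fin.consEquiv fun _ => Fin N)).symm

theorem tripleEquiv_embR_zero (R : RMat N) :
    tripleEquiv (embR 3 R 0) =
      reindex (Equiv.prodAssoc _ _ _) (Equiv.prodAssoc _ _ _) (R ⊗ₖ 1) := by
  ext ⟨a, b, c⟩ ⟨a', b', c'⟩
  change embR 3 R 0 ![a, b, c] ![a', b', c'] = R (a, b) (a', b') * (1 : Matrix _ _ ℂ) c c'
  simp [embR, Fin.forall_fin_succ, one_apply]

theorem tripleEquiv_embR_one (R : RMat N) :
    tripleEquiv (embR 3 R 1) = 1 ⊗ₖ R := by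
  ext ⟨a, b, c⟩ ⟨a', b', c'⟩
  change embR 3 R 1 ![a, b, c] ![a', b', c'] = (1 : Matrix _ _ ℂ) a a' * R (b, c) (b', c')
  simp [embR, Fin.forall_fin_succ, one_apply]

/-- The matrix `P Z₂ Q`, where `Z` is the matrix unit in position `(d, e)`. -/
def conjSingle (P Q : RMat N) (d e : Fin N) : RMat N :=
  P * 1 ⊗ₖ single d e 1 * Q

theorem conjSingle_apply (P Q : RMat N) (d e : Fin N) (r s : Fin N × Fin N) :
    conjSingle P Q d e r s = ∑ c, P r (c, d) * Q (c, e) s := by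
  simp [conjSingle, mul_apply, Fintype.sum_prod_type, one_apply, single_apply, ite_and]

theorem tripleEquiv_mul_mul_apply (P R Q : RMat N) (a b u x f v : Fin N) :
    tripleEquiv (embR 3 P 0 * embR 3 R 1 * embR 3 Q 0) (a, b, u) (x, f, v) =
      ∑ p : Fin N × Fin N, conjSingle P Q p.1 p.2 (a, b) (x, f) * R (p.1, u) (p.2, v) := by
  rw [map_mul, map_mul, tripleEquiv_embR_zero, tripleEquiv_embR_zero, tripleEquiv_embR_one]
  simp only [conjSingle_apply, mul_apply, Fintype.sum_prod_type, one_apply, Finset.sum_mul,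
    reindex_apply, submatrix_apply, Equiv.prodAssoc_symm_apply, kroneckerMap_apply, mul_ite,
    ite_mul, mul_one, one_mul, mul_zero, zero_mul, Finset.sum_ite_eq, Finset.sum_ite_eq',
    Finset.mem_univ, if_true, mul_right_comm _ (R _ _), Finset.sum_const_zero, Finset.sum_ite_irrel]
  rw [sum_comm_reverse]

/-- By the braid relation `Tr₁(C₁ P₁₂ R₂₃ Q₁₂) = Tr₁(C₁ Q₂₃ R₁₂ P₂₃) = Q P = I`, and the invertible
realignment of `R` can be cancelled from the left-hand side. -/
theorem leftTrace_conj_single {R P Q : RMat N} {C : Matrix (Fin N) (Fin N) ℂ}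
    (hR : IsUnit (realign R)) (hC : leftTrace C R = 1) (hQP : Q * P = 1)
    (hbraid : embR 3 P 0 * embR 3 R 1 * embR 3 Q 0 = embR 3 Q 1 * embR 3 R 0 * embR 3 P 1)
    (d e : Fin N) :
    leftTrace C (conjSingle P Q d e) = C e d • 1 := by
  have htrace : leftTrace C (tripleEquiv (embR 3 P 0 * embR 3 R 1 * embR 3 Q 0)) = 1 := by
    rw [hbraid, map_mul, map_mul, tripleEquiv_embR_one, tripleEquiv_embR_one,
      leftTrace_one_kronecker_mul, tripleEquiv_embR_zero, leftTrace_reindex_kronecker_one, hC,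
      one_kronecker_one, mul_one, hQP]
  ext b f
  let K : Fin N × Fin N → ℂ := fun p => leftTrace C (conjSingle P Q p.1 p.2) b f
  let δ : ℂ := (1 : Matrix (Fin N) (Fin N) ℂ) b f
  suffices hK : K = δ • fun p => C p.2 p.1 from (congrFun hK (d, e)).trans (mul_comm _ _)
  refine vecMul_injective_of_isUnit hR (funext fun ⟨u, v⟩ => ?_)
  calc (K ᵥ* realign R) (u, v)
      = leftTrace C (tripleEquiv (embR 3 P 0 * embR 3 R 1 * embR 3 Q 0)) (b, u) (f, v) := by
        simp only [K, leftTrace_apply, tripleEquiv_mul_mul_apply, vecMul, dotProduct,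
          Finset.sum_mul, Finset.mul_sum]
        simp only [← mul_assoc]
        rw [Finset.sum_comm]
        exact Finset.sum_congr rfl fun a _ => Finset.sum_comm
    _ = δ * leftTrace C R u v := by
        rw [htrace, hC, ← one_kronecker_one, kroneckerMap_apply]
    _ = ((δ • fun p => C p.2 p.1) ᵥ* realign R) (u, v) := by
        rw [leftTrace_eq_vecMul_realign, smul_vecMul, Pi.smul_apply, smul_eq_mul]

theorem braid_conj {G : Type*} [Group G] {a b : G} (h : a * b * a = b * a * b) :
    a * b * a⁻¹ = b⁻¹ * a * b := by
  rw [mul_inv_eq_iff_eq_mul, eq_comm, mul_assoc, mul_assoc, inv_mul_eq_iff_eq_mul, ← mul_assoc,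
    ← mul_assoc, h]

theorem leftTrace_submatrix_mul (C : Matrix (Fin N) (Fin N) ℂ) (S T : RMat N) (b d e f : Fin N) :
    leftTrace (T.submatrix (·, e) (·, f) * C) S b d = leftTrace C (conjSingle S T d e) b f := by
  simp only [leftTrace_apply, conjSingle_apply, mul_apply, submatrix_apply, Finset.sum_mul,
    Finset.mul_sum]
  refine Finset.sum_congr rfl fun a _ => Finset.sum_comm.trans ?_
  exact Finset.sum_congr rfl fun x _ => Finset.sum_congr rfl fun c _ => by ring

theorem leftTrace_mul_submatrix (C : Matrix (Fin N) (Fin N) ℂ) (S T : RMat N) (b e f y : Fin N) :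
    leftTrace (C * T.submatrix (·, e) (·, f)) S y b = leftTrace C (conjSingle T S f y) e b := by
  simp only [leftTrace_apply, conjSingle_apply, mul_apply, submatrix_apply, Finset.sum_mul,
    Finset.mul_sum]
  rw [sum_comm_reverse]
  refine Finset.sum_congr rfl fun g _ => Finset.sum_congr rfl fun x _ =>
    Finset.sum_congr rfl fun a _ => by ring

theorem eq_of_leftTrace_submatrix_eq {R S T : RMat N} (hR : IsUnit (realign R))
    (h : ∀ e f, leftTrace (R.submatrix (·, e) (·, f)) S = leftTrace (R.submatrix (·, e) (·, f)) T) :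
    S = T := by
  ext ⟨a, b⟩ ⟨x, d⟩
  let F (X : RMat N) (p : Fin N × Fin N) : ℂ := X (p.2, b) (p.1, d)
  have hF (X : RMat N) (e f : Fin N) :
      (F X ᵥ* realign R) (e, f) = leftTrace (R.submatrix (·, e) (·, f)) X b d := by
    rw [leftTrace_apply, vecMul, dotProduct, Fintype.sum_prod_type_right]
    exact Finset.sum_congr rfl fun a _ => Finset.sum_congr rfl fun x _ => mul_comm _ _
  refine congrFun (vecMul_injective_of_isUnit hR (funext fun ⟨e, f⟩ => ?_) : F S = F T) (x, a)
  exact (hF S e f).trans ((congrFun₂ (h e f) b d).trans (hF T e f).symm)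

theorem commute_kronecker_of_leftTrace_eq_one {R : (RMat N)ˣ} {C : Matrix (Fin N) (Fin N) ℂ}
    (hbr : IsBraiding R.val) (hR : IsUnit (realign R.val)) (hC : leftTrace C R.val = 1) :
    Commute (C ⊗ₖ C) R.val := by
  let σ (i : ℕ) : (TMat N 3 ℂ)ˣ := Units.map (embRHom N 3 i) R
  have hσ : σ 0 * σ 1 * σ 0 = σ 1 * σ 0 * σ 1 := Units.ext hbr
  have htrace := leftTrace_conj_single hR hC R.inv_mul (congrArg Units.val (braid_conj hσ))
  have htrace' :=
    leftTrace_conj_single hR hC R.mul_inv (congrArg Units.val (braid_conj hσ.symm).symm)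
  suffices hinv : Commute (C ⊗ₖ C) R⁻¹.val from Commute.units_inv_right_iff.1 hinv
  refine eq_of_leftTrace_submatrix_eq hR fun e f => ?_
  rw [leftTrace_kronecker_mul, leftTrace_mul_kronecker]
  ext y d
  simp only [mul_apply, leftTrace_submatrix_mul, leftTrace_mul_submatrix, htrace, htrace']
  simp [one_apply, mul_comm]

theorem commute_tensorPow_Cmat {R : (RMat N)ˣ} {Ψ : RMat N} (hbr : IsBraiding R.val)
    (hΨ : SkewInv R.val Ψ) : Commute (tensorPow (Fin 2) (Cmat Ψ)) (twoSite R.val) := by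
  have hR : IsUnit (realign R.val) := IsUnit.of_mul_eq_one _ (realign_mul_of_skewInv hΨ)
  have htensor : tensorPow (Fin 2) (Cmat Ψ) = twoSite (Cmat Ψ ⊗ₖ Cmat Ψ) := by
    ext f g
    exact Fin.prod_univ_two fun t => Cmat Ψ (f t) (g t)
  rw [htensor]
  exact (commute_kronecker_of_leftTrace_eq_one hbr hR (leftTrace_Cmat hΨ)).map twoSite

end SkewInverse

section RankOne

variable {m n K A : Type*} [Fintype n] [Field K] [Ring A] [Algebra K A]

theorem exists_eq_vecMulVec_of_rank_eq_one {S : Matrix m n K} (h : S.rank = 1) :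
    ∃ (u : m → K) (v : n → K), S = vecMulVec u v := by
  classical
  obtain ⟨u, -, hu⟩ := finrank_eq_one_iff'.1 h
  choose v hv using fun g => hu ⟨S *ᵥ Pi.single g 1, LinearMap.mem_range_self S.mulVecLin _⟩
  refine ⟨u, v, ?_⟩
  ext f g
  have hcol : v g * u.1 f = (S *ᵥ Pi.single g 1) f := congrFun (congrArg Subtype.val (hv g)) f
  rw [vecMulVec_apply, mul_comm, hcol, mulVec_single_one, col_apply]

theorem trace_map_algebraMap_mul_comm (S : Matrix n n K) (Z : Matrix n n A) :
    trace (S.map (algebraMap K A) * Z) = trace (Z * S.map (algebraMap K A)) := by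
  simp only [trace, diag_apply, mul_apply, map_apply, Algebra.commutes]
  exact Finset.sum_comm

theorem exists_map_mul_mul_map_eq_smul_of_rank_eq_one {S : Matrix n n K} (h : S.rank = 1)
    (Z : Matrix n n A) :
    ∃ z : A, S.map (algebraMap K A) * Z * S.map (algebraMap K A) =
      z • S.map (algebraMap K A) := by
  obtain ⟨u, v, rfl⟩ := exists_eq_vecMulVec_of_rank_eq_one h
  refine ⟨∑ b, ∑ a, (v a * u b) • Z a b, ?_⟩
  ext f g
  simp only [mul_apply, map_apply, vecMulVec_apply, Matrix.smul_apply, smul_eq_mul, Finset.sum_mul]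
  refine Finset.sum_congr rfl fun b _ => Finset.sum_congr rfl fun a _ => ?_
  rw [← Algebra.commutes, ← Algebra.commutes, ← Algebra.smul_def, ← Algebra.smul_def,
    ← Algebra.smul_def, smul_smul, smul_smul]
  congr 1
  ring

end RankOne

section WeightedTrace

variable {N k : ℕ} {A : Type*} [Ring A] [Algebra ℂ A] {C : Matrix (Fin N) (Fin N) ℂ}
  {S : TMat N k ℂ}

theorem rTr_eq_trace (C : Matrix (Fin N) (Fin N) ℂ) (Z : TMat N k A) :
    rTr C Z = trace (liftC A (tensorPow (Fin k) C) * Z) := by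
  simp only [rTr, trace, diag_apply, mul_apply, liftC, map_apply, tensorPow, of_apply,
    Algebra.smul_def]

theorem rTr_smul {B : Type*} [DistribSMul B A] [SMulCommClass ℂ B A] (C : Matrix (Fin N) (Fin N) ℂ)
    (b : B) (Z : TMat N k A) : rTr C (b • Z) = b • rTr C Z := by
  simp only [rTr, Matrix.smul_apply, Finset.smul_sum, smul_comm _ b]

theorem rTr_liftC (C : Matrix (Fin N) (Fin N) ℂ) (S : TMat N k ℂ) :
    rTr C (liftC A S) = algebraMap ℂ A (rTr C S) := by
  simp only [rTr, liftC, map_apply, map_sum, smul_eq_mul, map_mul, Algebra.smul_def]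

theorem rTr_liftC_mul_comm (hS : Commute (tensorPow (Fin k) C) S) (Z : TMat N k A) :
    rTr C (liftC A S * Z) = rTr C (Z * liftC A S) := by
  have hlift : Commute (liftC A (tensorPow (Fin k) C)) (liftC A S) := hS.map (liftHom N k A)
  rw [rTr_eq_trace, rTr_eq_trace, ← mul_assoc, hlift.eq, mul_assoc, ← mul_assoc _ Z]
  exact trace_map_algebraMap_mul_comm S _

theorem isIdempotentElem_liftC (hidem : IsIdempotentElem S) : IsIdempotentElem (liftC A S) :=
  hidem.map (liftHom N k A)

theorem rTr_liftC_mul_of_sandwich (hS : Commute (tensorPow (Fin k) C) S)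
    (hidem : IsIdempotentElem S) {Z : TMat N k A} {z : A}
    (hz : liftC A S * Z * liftC A S = z • liftC A S) :
    rTr C (liftC A S * Z) = rTr C S • z := by
  calc rTr C (liftC A S * Z)
      = rTr C (liftC A S * (liftC A S * Z)) := by
        rw [← mul_assoc, (isIdempotentElem_liftC hidem).eq]
    _ = rTr C (z • liftC A S) := by rw [rTr_liftC_mul_comm hS, hz]
    _ = rTr C S • z := by
        rw [rTr_smul, rTr_liftC, smul_eq_mul, Algebra.smul_def, Algebra.commutes]

/-- Compression by a rank one idempotent is multiplicative: it lands in a copy of `A`. -/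
theorem rTr_smul_rTr_sandwich (hS : Commute (tensorPow (Fin k) C) S) (hidem : IsIdempotentElem S)
    (hrank : S.rank = 1) (U V : TMat N k A) :
    rTr C S • rTr C (liftC A S * (U * liftC A S * V)) =
      rTr C (liftC A S * U) * rTr C (liftC A S * V) := by
  obtain ⟨u, hu⟩ := exists_map_mul_mul_map_eq_smul_of_rank_eq_one hrank U
  obtain ⟨v, hv⟩ := exists_map_mul_mul_map_eq_smul_of_rank_eq_one hrank V
  change liftC A S * U * liftC A S = u • liftC A S at hu
  change liftC A S * V * liftC A S = v • liftC A S at hv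
  have huv : liftC A S * (U * liftC A S * V) * liftC A S = (u * v) • liftC A S := by
    rw [← mul_assoc, ← mul_assoc, hu, smul_mul_assoc, smul_mul_assoc, hv, smul_smul]
  rw [rTr_liftC_mul_of_sandwich hS hidem huv, rTr_liftC_mul_of_sandwich hS hidem hu,
    rTr_liftC_mul_of_sandwich hS hidem hv, smul_mul_smul_comm, smul_smul]

theorem commute_tensorPow_asym {R : RMat N} (hCR : Commute (tensorPow (Fin 2) C) (twoSite R))
    (q : ℂ) : Commute (tensorPow (Fin k) C) (Asym k R q k) := by
  rw [asym_eq_skewSymmetrizer]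
  refine commute_skewSymmetrizer fun i hi => ?_
  rw [embR_eq_windowHom R hi]
  exact commute_tensorPow_windowHom _ hCR

theorem commute_liftC_asym_upChain {R : (RMat N)ˣ} (hbr : IsBraiding R.val) (q : ℂ)
    {M : Matrix (Fin N) (Fin N) A} (hRE : RERel R.val M) :
    Commute (liftC A (Asym k R.val q k)) (upChain k R.val R⁻¹.val M k) := by
  have hmap : liftC A (Asym k R.val q k) =
      skewSymmetrizer (fun i => (crossing A k R i : TMat N k A)) q k := by
    rw [asym_eq_skewSymmetrizer]
    exact map_skewSymmetrizer (liftHom N k A) _ q k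
  rw [hmap, upChain_eq_upProd]
  exact (commute_skewSymmetrizer fun i hi => ((isBraidFamily_crossing hbr).commute_upProd
    (isFirstStrand_emb1 R M) (fun j => reflectionRel_crossing hbr hRE) hi le_rfl).symm).symm

theorem capChainA_mul_liftC_asym {R : (RMat N)ˣ} {q : ℂ} (hq0 : q ≠ 0) (hq : q - q⁻¹ ≠ 0)
    (hbr : IsBraiding R.val) (hH : HeckeCond R.val q) (hqNum : ∀ j, 2 ≤ j → j ≤ k → qNum q j ≠ 0)
    {M D : Matrix (Fin N) (Fin N) A} (hDD : DDRel R⁻¹.val D) (hMD : PermRel R.val R⁻¹.val M D) :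
    capChainA k R.val R⁻¹.val q (M * D) k * liftC A (Asym k R.val q k) =
      q ^ (k * (k - 1)) • (upChain k R.val R⁻¹.val M k *
        (downChain k R.val R⁻¹.val D k * liftC A (Asym k R.val q k))) := by
  rw [capChainA_eq_capelliProd R hq0 hq, emb1_mul, upChain_eq_upProd, downChain_eq_downProd]
  exact capelliProd_mul_eq hq0 (isBraidFamily_crossing hbr) (isFirstStrand_emb1 R M)
    (isFirstStrand_emb1 R D) (fun j => reflectionRel_crossing_inv hbr hDD)
    (fun j => permutationRel_crossing hbr hMD) le_rfl
    (isSkew_liftC_asym hq0 hq hbr hH hqNum)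

end WeightedTrace

theorem eq_smul_mul_of_inv_pow_sq_smul_eq {A : Type*} [Ring A] [Algebra ℂ A] {q : ℂ} (hq0 : q ≠ 0)
    {m : ℕ} {x y z : A} (h : q⁻¹ ^ (m ^ 2) • x = q ^ (m * (m - 1)) • (y * z)) :
    x = q⁻¹ ^ m • ((q ^ (m ^ 2) • y) * (q ^ (m ^ 2) • z)) := by
  have hexp : m ^ 2 = m + m * (m - 1) := by
    cases m with
    | zero => rfl
    | succ m => rw [Nat.add_sub_cancel]; ring
  have hpow : q⁻¹ ^ m * q ^ (m ^ 2) = q ^ (m * (m - 1)) := by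
    rw [hexp, pow_add, inv_pow, inv_mul_cancel_left₀ (pow_ne_zero m hq0)]
  rw [inv_pow, inv_smul_eq_iff₀ (pow_ne_zero _ hq0), smul_smul] at h
  rw [h, smul_mul_smul_comm, smul_smul, ← mul_assoc, hpow, mul_comm]

end QuantumCapelli

open QuantumCapelli in
theorem statement6_general {N m : ℕ} {R : (RMat N)ˣ} {q : ℂ} {C : Matrix (Fin N) (Fin N) ℂ}
    (hq0 : q ≠ 0) (hq1 : q ≠ 1) (hqm1 : q ≠ -1) (hbr : IsBraiding R.val)
    (hH : HeckeCond R.val q) (hCR : Commute (tensorPow (Fin 2) C) (twoSite R.val))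
    (hqm : ∀ j : ℕ, 2 ≤ j → j ≤ m → qNum q j ≠ 0) (hrank : (Asym m R.val q m).rank = 1)
    {A : Type*} [Ring A] [Algebra ℂ A] {M D : Matrix (Fin N) (Fin N) A}
    (hRE : RERel R.val M) (hDD : DDRel R⁻¹.val D) (hperm : PermRel R.val R⁻¹.val M D) :
    rTr C (Asym m R.val q m) •
        rTr C (liftC A (Asym m R.val q m) * capChainA m R.val R⁻¹.val q (M * D) m)
      = q ^ (m * (m - 1)) •
          (rTr C (liftC A (Asym m R.val q m) * upChain m R.val R⁻¹.val M m) *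
            rTr C (liftC A (Asym m R.val q m) * downChain m R.val R⁻¹.val D m)) := by
  set S := Asym m R.val q m
  set U := upChain m R.val R⁻¹.val M m
  set V := downChain m R.val R⁻¹.val D m
  have hq := sub_inv_ne_zero hq0 hq1 hqm1
  have hidem : IsIdempotentElem S := isIdempotentElem_asym hq0 hq hbr hH hqm
  have hCS : Commute (tensorPow (Fin m) C) S := commute_tensorPow_asym hCR q
  have hSU : Commute (liftC A S) U := commute_liftC_asym_upChain hbr q hRE
  have hinsert : liftC A S * (U * V) = liftC A S * (U * liftC A S * V) := by
    rw [← hSU.eq, mul_assoc, ← mul_assoc (liftC A S) (liftC A S), (isIdempotentElem_liftC hidem).eq]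
  rw [rTr_liftC_mul_comm hCS, capChainA_mul_liftC_asym hq0 hq hbr hH hqm hDD hperm, rTr_smul,
    ← mul_assoc U, ← rTr_liftC_mul_comm hCS, hinsert, smul_comm,
    rTr_smul_rTr_sandwich hCS hidem hrank]

/-- quantum Capelli identity:  for a skew-invertible Hecke symmetry
of rank `m`,
`⟨A^(m) L_{1̄}(L_{2̄}+qI)⋯(L_{m̄}+q^{m−1}(m−1)_q I)⟩_{1…m}
  = q^{−m} · det_R M · det_{R⁻¹} D`, where
`det_R M = q^{m²}⟨A^(m) M_{1̄}⋯M_{m̄}⟩_{1…m}` and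
`det_{R⁻¹} D = q^{m²}⟨A^(m) D_{m̄}⋯D_{1̄}⟩_{1…m}`, with `L = MD`. -/
theorem statement6 {N : ℕ} (R Rinv Ψ : RMat N) (q : ℂ) (m : ℕ)
    (hq0 : q ≠ 0) (hq1 : q ≠ 1) (hqm1 : q ≠ -1)
    (hinv : R * Rinv = 1) (hinv' : Rinv * R = 1)
    (hbr : IsBraiding R) (hH : HeckeCond R q) (hΨ : SkewInv R Ψ)
    (hqm : ∀ j : ℕ, 2 ≤ j → j ≤ m → qNum q j ≠ 0)
    (hrank : (Asym m R q m).rank = 1)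
    (hA0 : Asym (m + 1) R q (m + 1) = 0)
    (htr : rTr (Cmat Ψ) (Asym m R q m) = q⁻¹ ^ (m ^ 2))
    {A : Type _} [Ring A] [Algebra ℂ A]
    (M D : Matrix (Fin N) (Fin N) A)
    (hRE : RERel R M) (hDD : DDRel Rinv D) (hperm : PermRel R Rinv M D) :
    rTr (Cmat Ψ) (liftC A (Asym m R q m) * capChainA m R Rinv q (M * D) m)
      = (q⁻¹ ^ m) •
          (((q ^ (m ^ 2)) • rTr (Cmat Ψ) (liftC A (Asym m R q m) * upChain m R Rinv M m)) *
           ((q ^ (m ^ 2)) • rTr (Cmat Ψ) (liftC A (Asym m R q m) * downChain m R Rinv D m))) := by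
  have h := statement6_general (R := ⟨R, Rinv, hinv, hinv'⟩) hq0 hq1 hqm1 hbr hH
    (QuantumCapelli.commute_tensorPow_Cmat hbr hΨ) hqm hrank hRE hDD hperm
  exact QuantumCapelli.eq_smul_mul_of_inv_pow_sq_smul_eq hq0 (htr ▸ h)
end
end

section
/- Let R be a Hecke symmetry with parameter q, let M and D be N×N matrices with entries in a unital associative ℂ-algebra 𝒜 satisfying the Reflection Equation R M₁ R M₁ = M₁ R M₁ R, the relation R⁻¹ D₁ R⁻¹ D₁ = D₁ R⁻¹ D₁ R⁻¹, and the permutation relations D₁ R M₁ = R M₁ R⁻¹ D₁ R⁻¹ + I, and set L := M D. Then for all integers k ≥ 2 and 1 ≤ p ≤ k−1, as an identity of N^k×N^k matrices over 𝒜: D_{p̄} L_{k̄} = L_{k̄} D_{p̄} R_{k−1→p+1} R_p⁻² R⁻¹_{p+1→k−1} + D_{p̄} R_{k−1→p+1} R_p⁻¹ R⁻¹_{p+1→k−1}, where R_{a→b} := R_a R_{a−1} ⋯ R_b for a ≥ b and R⁻¹_{b→a} := R_b⁻¹ R_{b+1}⁻¹ ⋯ R_a⁻¹ for b ≤ a (each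 chain being the identity matrix when its index range is empty). -/
open Matrix BigOperators

noncomputable section

/-!
Write `r i` for the paper's `R_{i+1}` and index the copies `D i`, `L i` from `0`. The rule for the
first two copies, `D 0 * L 1 = L 1 * D 0 * (r 0)⁻² + D 0 * (r 0)⁻¹`, comes straight from the
relations between `M` and `D`. Everything else is transport by conjugation. By the braid relations,
conjugation by `r i * r (i + 1)` takes `D i`, `L (i + 1)`, `r i` to `D (i + 1)`, `L (i + 2)`,
`r (i + 1)`, which gives the rule for any two neighbouring copies. Conjugation by
`w = r (j - 1) ⋯ r (i + 1)` fixes `D i` and takes `L (i + 1)` to `L j`, so it turns the rule for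
neighbours into the rule for `D i` and `L j`, with `(r i)⁻ⁿ` replaced by `w * (r i)⁻ⁿ * w⁻¹`.
-/

section Conjugation

variable {S : Type*} [Monoid S]

theorem eq_of_semiconjBy {g : Sˣ} {x y y' : S} (h : SemiconjBy (g : S) x y)
    (h' : SemiconjBy (g : S) x y') : y = y' :=
  g.mul_left_inj.mp (h.eq.symm.trans h'.eq)

theorem commute_of_semiconjBy {g : Sˣ} {x x' y y' : S} (hxy : Commute x y)
    (hx : SemiconjBy (g : S) x x') (hy : SemiconjBy (g : S) y y') : Commute x' y' :=
  eq_of_semiconjBy (hx.mul_right hy) (hxy.eq ▸ hy.mul_right hx)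

end Conjugation

section BraidCopies

/-- The elements `r 0, …, r (k - 2)` satisfy the relations of the braid group on `k` strands.
No condition is imposed on the remaining terms of the sequence. -/
structure IsBraidSystem {G : Type*} [Mul G] (k : ℕ) (r : ℕ → G) : Prop where
  commute : ∀ ⦃i j⦄, i + 1 < j → j + 1 < k → Commute (r i) (r j)
  braid : ∀ ⦃i⦄, i + 2 < k → r i * r (i + 1) * r i = r (i + 1) * r i * r (i + 1)

/-- The elements `X 0, …, X (k - 1)` behave like the copies `X_{1̄}, …, X_{k̄}` of a matrix: each
is the conjugate of the preceding one by a braid generator, and `X 0` lives in the first factor. -/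
structure IsCopySystem {S : Type*} [Monoid S] (k : ℕ) (r : ℕ → Sˣ) (X : ℕ → S) : Prop where
  semiconjBy : ∀ ⦃i⦄, i + 1 < k → SemiconjBy (r i : S) (X i) (X (i + 1))
  commute_zero : ∀ ⦃j⦄, 0 < j → j + 1 < k → Commute (X 0) (r j : S)

/-- The descending chain `r (a + n - 1) * ⋯ * r (a + 1) * r a` of `n` factors. -/
def descChain {G : Type*} [Monoid G] (r : ℕ → G) (a : ℕ) : ℕ → G
  | 0 => 1
  | n + 1 => r (a + n) * descChain r a n

section Monoid

variable {S : Type*} [Monoid S] {k : ℕ} {r : ℕ → Sˣ} {X : ℕ → S}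

theorem IsCopySystem.commute_of_lt (hX : IsCopySystem k r X) (hr : IsBraidSystem k r) {i j : ℕ}
    (hij : i < j) (hj : j + 1 < k) : Commute (X i) (r j : S) := by
  induction i with
  | zero => exact hX.commute_zero hij hj
  | succ i ih =>
    exact commute_of_semiconjBy (ih (by lia)) (hX.semiconjBy (by lia)) (hr.commute hij hj).units_val

theorem IsCopySystem.commute_add_two (hX : IsCopySystem k r X) (hr : IsBraidSystem k r) {i : ℕ}
    (hi : i + 2 < k) : Commute (X (i + 2)) (r i : S) := by
  have hconjX : SemiconjBy (↑(r (i + 1) * r i) : S) (X i) (X (i + 2)) :=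
    (hX.semiconjBy hi).mul_left (hX.semiconjBy (by lia))
  have hconjr : SemiconjBy (r (i + 1) * r i) (r (i + 1)) (r i) := by
    rw [SemiconjBy, ← hr.braid hi, mul_assoc]
  exact commute_of_semiconjBy (hX.commute_of_lt hr (by lia) hi) hconjX hconjr.units_val

theorem IsBraidSystem.semiconjBy_shift (hr : IsBraidSystem k r) {i : ℕ} (hi : i + 2 < k) :
    SemiconjBy (r i * r (i + 1)) (r i) (r (i + 1)) := by
  rw [SemiconjBy, hr.braid hi, mul_assoc]

theorem IsCopySystem.semiconjBy_shift (hX : IsCopySystem k r X) (hr : IsBraidSystem k r) {i : ℕ}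
    (hi : i + 2 < k) : SemiconjBy (↑(r i * r (i + 1)) : S) (X i) (X (i + 1)) :=
  (hX.semiconjBy (by lia)).mul_left (hX.commute_of_lt hr (by lia) hi).symm

theorem IsCopySystem.semiconjBy_shift_succ (hX : IsCopySystem k r X) (hr : IsBraidSystem k r)
    {i : ℕ} (hi : i + 2 < k) :
    SemiconjBy (↑(r i * r (i + 1)) : S) (X (i + 1)) (X (i + 2)) :=
  SemiconjBy.mul_left (hX.commute_add_two hr hi).symm (hX.semiconjBy hi)

theorem IsCopySystem.semiconjBy_descChain (hX : IsCopySystem k r X) {a n : ℕ} (h : a + n < k) :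
    SemiconjBy (↑(descChain r a n) : S) (X a) (X (a + n)) := by
  induction n with
  | zero => exact SemiconjBy.one_left _
  | succ n ih => exact (hX.semiconjBy h).mul_left (ih (by lia))

theorem IsCopySystem.commute_descChain (hX : IsCopySystem k r X) (hr : IsBraidSystem k r)
    {i a n : ℕ} (hi : i < a) (h : a + n < k) : Commute (↑(descChain r a n) : S) (X i) := by
  induction n with
  | zero => exact Commute.one_left _
  | succ n ih =>
    exact (hX.commute_of_lt hr (by lia) (by lia)).symm.mul_left (ih (by lia))

end Monoid

section Semiring

variable {B : Type*} [Semiring B] {k : ℕ} {r : ℕ → Bˣ} {D L : ℕ → B}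

theorem mul_conj_eq_of_permutation {r : Bˣ} {m d : B}
    (hdd : ↑r⁻¹ * d * ↑r⁻¹ * d = d * ↑r⁻¹ * d * ↑r⁻¹)
    (hperm : d * r * m = r * m * ↑r⁻¹ * d * ↑r⁻¹ + 1) :
    d * (r * (m * d) * ↑r⁻¹) = r * (m * d) * ↑r⁻¹ * d * (↑r⁻¹ * ↑r⁻¹) + d * ↑r⁻¹ :=
  calc d * (r * (m * d) * ↑r⁻¹)
      = d * r * m * (d * ↑r⁻¹) := by simp only [mul_assoc]
    _ = r * m * (↑r⁻¹ * d * ↑r⁻¹ * d) * ↑r⁻¹ + d * ↑r⁻¹ := by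
        rw [hperm, add_mul, one_mul]; simp only [mul_assoc]
    _ = r * (m * d) * ↑r⁻¹ * d * (↑r⁻¹ * ↑r⁻¹) + d * ↑r⁻¹ := by
        rw [hdd]; simp only [mul_assoc]

theorem exchange_transport {g : Bˣ} {d d' l l' s s' t t' : B} (h : d * l = l * d * t + d * s)
    (hd : SemiconjBy (g : B) d d') (hl : SemiconjBy (g : B) l l')
    (hs : SemiconjBy (g : B) s s') (ht : SemiconjBy (g : B) t t') :
    d' * l' = l' * d' * t' + d' * s' :=
  eq_of_semiconjBy (hd.mul_right hl)
    (h ▸ ((hl.mul_right hd).mul_right ht).add_right (hd.mul_right hs))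

theorem IsCopySystem.exchange_succ (hr : IsBraidSystem k r) (hD : IsCopySystem k r D)
    (hL : IsCopySystem k r L)
    (h0 : D 0 * L 1 = L 1 * D 0 * (↑(r 0)⁻¹ * ↑(r 0)⁻¹) + D 0 * ↑(r 0)⁻¹)
    {i : ℕ} (hi : i + 1 < k) :
    D i * L (i + 1) = L (i + 1) * D i * (↑(r i)⁻¹ * ↑(r i)⁻¹) + D i * ↑(r i)⁻¹ := by
  induction i with
  | zero => exact h0
  | succ i ih =>
    have hs := (hr.semiconjBy_shift hi).units_val.units_inv_right
    exact exchange_transport (ih (by lia)) (hD.semiconjBy_shift hr hi)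
      (hL.semiconjBy_shift_succ hr hi) hs (hs.mul_right hs)

theorem IsCopySystem.exchange (hr : IsBraidSystem k r) (hD : IsCopySystem k r D)
    (hL : IsCopySystem k r L)
    (h0 : D 0 * L 1 = L 1 * D 0 * (↑(r 0)⁻¹ * ↑(r 0)⁻¹) + D 0 * ↑(r 0)⁻¹)
    {i n : ℕ} (h : i + 1 + n < k) :
    D i * L (i + 1 + n) =
      L (i + 1 + n) * D i *
          (descChain r (i + 1) n * (↑(r i)⁻¹ * ↑(r i)⁻¹) * ↑(descChain r (i + 1) n)⁻¹)
        + D i * (descChain r (i + 1) n * ↑(r i)⁻¹ * ↑(descChain r (i + 1) n)⁻¹) :=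
  exchange_transport (hD.exchange_succ hr hL h0 (by lia))
    (hD.commute_descChain hr i.lt_succ_self h) (hL.semiconjBy_descChain h)
    (Units.mk_semiconjBy _ _) (Units.mk_semiconjBy _ _)

end Semiring

end BraidCopies

section LegEmbedding

variable {ι κ μ α A : Type*} [Fintype ι] [DecidableEq ι] [Fintype κ] [DecidableEq κ]
  [Fintype μ] [DecidableEq μ] [Fintype α] [DecidableEq α]

/-- A multi-index on `κ` is a multi-index on `ι`, embedded by `σ`, together with a multi-index on
the remaining positions. -/
def splitMultiIndex (α : Type*) (σ : ι ↪ κ) :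
    (κ → α) ≃ (ι → α) × ({j // j ∉ Set.range σ} → α) :=
  (Equiv.piEquivPiSubtypeProd (· ∈ Set.range σ) fun _ => α).trans
    (((Equiv.ofInjective σ σ.injective).symm.arrowCongr (Equiv.refl α)).prodCongr (Equiv.refl _))

/-- The operator on the tensor power indexed by `κ` that acts as a given operator on the legs
selected by `σ` and as the identity on the other legs. -/
def legEmb [Semiring A] (σ : ι ↪ κ) : Matrix (ι → α) (ι → α) A →+* Matrix (κ → α) (κ → α) A :=
  (reindexRingEquiv A (splitMultiIndex α σ).symm).toRingHom.comp
    ((blockDiagonalRingHom _ _ A).comp (Pi.constRingHom _ _))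

section Semiring

variable [Semiring A]

theorem legEmb_apply (σ : ι ↪ κ) (X : Matrix (ι → α) (ι → α) A) (f g : κ → α)
    [Decidable (∀ j ∉ Set.range σ, f j = g j)] :
    legEmb σ X f g = if ∀ j ∉ Set.range σ, f j = g j then X (f ∘ σ) (g ∘ σ) else 0 := by
  have hrest : (splitMultiIndex α σ f).2 = (splitMultiIndex α σ g).2 ↔
      ∀ j ∉ Set.range σ, f j = g j := by
    simp only [funext_iff, Subtype.forall]; rfl
  exact (blockDiagonal_apply (fun _ => X) (splitMultiIndex α σ f) (splitMultiIndex α σ g)).trans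
    (if_congr hrest rfl rfl)

theorem legEmb_trans (σ : ι ↪ κ) (τ : κ ↪ μ) (X : Matrix (ι → α) (ι → α) A) :
    legEmb (σ.trans τ) X = legEmb τ (legEmb σ X) := by
  ext f g
  have hrange : (∀ j ∉ Set.range (σ.trans τ), f j = g j) ↔
      (∀ j ∉ Set.range τ, f j = g j) ∧ ∀ i ∉ Set.range σ, (f ∘ τ) i = (g ∘ τ) i := by
    refine ⟨fun h => ⟨fun j hj => h j ?_, fun i hi => h (τ i) ?_⟩, fun ⟨hτ, hσ⟩ j hj => ?_⟩
    · rintro ⟨i, rfl⟩; exact hj ⟨σ i, rfl⟩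
    · rintro ⟨a, ha⟩; exact hi ⟨a, τ.injective ha⟩
    · by_cases hjτ : j ∈ Set.range τ
      · obtain ⟨i, rfl⟩ := hjτ
        exact hσ i fun ⟨a, ha⟩ => hj ⟨a, congrArg τ ha⟩
      · exact hτ j hjτ
  simp only [legEmb_apply, hrange, ite_and]
  rfl

theorem legEmb_map {C : Type*} [Semiring C] (φ : A →+* C) (σ : ι ↪ κ)
    (X : Matrix (ι → α) (ι → α) A) : legEmb σ (X.map φ) = (legEmb σ X).map φ := by
  ext f g
  simp only [Matrix.map_apply, legEmb_apply, apply_ite φ, map_zero]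

theorem legEmb_mul_legEmb_apply {σ : ι ↪ κ} {τ : μ ↪ κ}
    (hd : Disjoint (Set.range σ) (Set.range τ)) (X : Matrix (ι → α) (ι → α) A)
    (Y : Matrix (μ → α) (μ → α) A) (f g : κ → α) :
    (legEmb σ X * legEmb τ Y) f g =
      if ∀ j ∉ Set.range σ ∪ Set.range τ, f j = g j then
        X (f ∘ σ) (g ∘ σ) * Y (f ∘ τ) (g ∘ τ) else 0 := by
  -- the only intermediate multi-index that contributes agrees with `g` on `σ` and `f` elsewhere
  set e : κ → α := (Set.range σ).piecewise g f with he
  have heσ : e ∘ σ = g ∘ σ :=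
    funext fun i => Set.piecewise_eq_of_mem _ _ _ ⟨i, rfl⟩
  have heτ : e ∘ τ = f ∘ τ :=
    funext fun i => Set.piecewise_eq_of_notMem _ _ _ (hd.notMem_of_mem_right ⟨i, rfl⟩)
  have hmid (h : κ → α) :
      ((∀ j ∉ Set.range σ, f j = h j) ∧ ∀ j ∉ Set.range τ, h j = g j) ↔
        h = e ∧ ∀ j ∉ Set.range σ ∪ Set.range τ, f j = g j := by
    constructor
    · rintro ⟨hσ, hτ⟩
      refine ⟨funext fun j => ?_, fun j hj =>
        (hσ j fun h => hj (.inl h)).trans (hτ j fun h => hj (.inr h))⟩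
      by_cases hj : j ∈ Set.range σ
      · rw [he, Set.piecewise_eq_of_mem _ _ _ hj, hτ j (hd.notMem_of_mem_left hj)]
      · rw [he, Set.piecewise_eq_of_notMem _ _ _ hj, hσ j hj]
    · rintro ⟨rfl, hfg⟩
      refine ⟨fun j hj => (Set.piecewise_eq_of_notMem _ _ _ hj).symm, fun j hj => ?_⟩
      by_cases hjσ : j ∈ Set.range σ
      · exact Set.piecewise_eq_of_mem _ _ _ hjσ
      · exact (Set.piecewise_eq_of_notMem _ _ _ hjσ).trans (hfg j (not_or.mpr ⟨hjσ, hj⟩))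
  simp only [Matrix.mul_apply, legEmb_apply, ite_zero_mul_ite_zero, hmid, ite_and,
    Finset.sum_ite_eq', Finset.mem_univ, if_true, heσ, heτ]

theorem commute_legEmb {σ : ι ↪ κ} {τ : μ ↪ κ} (hd : Disjoint (Set.range σ) (Set.range τ))
    {X : Matrix (ι → α) (ι → α) A} {Y : Matrix (μ → α) (μ → α) A}
    (hXY : ∀ a b c d, Commute (X a b) (Y c d)) : Commute (legEmb σ X) (legEmb τ Y) := by
  ext f g
  simp only [legEmb_mul_legEmb_apply hd, legEmb_mul_legEmb_apply hd.symm, Set.union_comm,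
    (hXY _ _ _ _).eq]

end Semiring

end LegEmbedding

section ConsecutiveLegs

/-- The `m` consecutive legs `i, i + 1, …, i + m - 1` out of `k`. -/
def consecutiveLegs {m k : ℕ} (i : ℕ) (h : i + m ≤ k) : Fin m ↪ Fin k :=
  (Fin.natAddEmb i).trans (Fin.castLEEmb h)

theorem consecutiveLegs_trans {l m k : ℕ} {a i : ℕ} (ha : a + l ≤ m) (hi : i + m ≤ k) :
    (consecutiveLegs a ha).trans (consecutiveLegs i hi) =
      consecutiveLegs (i + a) (by lia : i + a + l ≤ k) := by
  ext j
  exact (Nat.add_assoc i a j).symm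

theorem mem_range_consecutiveLegs {m k i : ℕ} (h : i + m ≤ k) (j : Fin k) :
    j ∈ Set.range (consecutiveLegs i h) ↔ i ≤ j ∧ j < i + m := by
  constructor
  · rintro ⟨a, rfl⟩
    exact ⟨Nat.le_add_right i a, Nat.add_lt_add_left a.isLt i⟩
  · rintro ⟨hi, hm⟩
    exact ⟨⟨j - i, by lia⟩, Fin.ext (Nat.add_sub_cancel' hi)⟩

theorem disjoint_range_consecutiveLegs {l m k i j : ℕ} (hi : i + l ≤ k) (hj : j + m ≤ k)
    (hij : i + l ≤ j) :
    Disjoint (Set.range (consecutiveLegs i hi)) (Set.range (consecutiveLegs j hj)) := by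
  rw [Set.disjoint_left]
  intro a
  simp only [mem_range_consecutiveLegs]
  lia

variable {N k : ℕ} {A : Type*} [Ring A]

theorem embR_eq_legEmb {i : ℕ} (h : i + 2 ≤ k) (R : RMat N) :
    embR k R i =
      legEmb (consecutiveLegs i h) (reindexRingEquiv ℂ (finTwoArrowEquiv (Fin N)).symm R) := by
  ext f g
  have hrange : (∀ j : Fin k, (j : ℕ) ≠ i → (j : ℕ) ≠ i + 1 → f j = g j) ↔
      ∀ j ∉ Set.range (consecutiveLegs i h), f j = g j := by
    refine forall_congr' fun j => ?_
    rw [mem_range_consecutiveLegs, ← and_imp]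
    exact imp_congr_left (by lia)
  rw [embR, dif_pos (show i + 1 < k from h), legEmb_apply]
  exact if_congr hrange rfl rfl

theorem emb1_eq_legEmb (h : 0 + 1 ≤ k) (X : Matrix (Fin N) (Fin N) A) :
    emb1 k X =
      legEmb (consecutiveLegs 0 h)
        (reindexRingEquiv A (Equiv.funUnique (Fin 1) (Fin N)).symm X) := by
  ext f g
  have hrange : (∀ j : Fin k, (j : ℕ) ≠ 0 → f j = g j) ↔
      ∀ j ∉ Set.range (consecutiveLegs 0 h), f j = g j := by
    refine forall_congr' fun j => ?_
    rw [mem_range_consecutiveLegs]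
    exact imp_congr_left (by lia)
  rw [emb1, dif_pos (show 0 < k by lia), legEmb_apply]
  exact if_congr hrange rfl rfl

theorem embR_of_le {i : ℕ} (h : k ≤ i + 1) (R : RMat N) : embR k R i = 1 := by
  ext f g
  simp only [embR, dif_neg h.not_gt]

theorem legEmb_embR {m i a : ℕ} (hi : i + m ≤ k) (ha : a + 2 ≤ m) (R : RMat N) :
    legEmb (consecutiveLegs i hi) (embR m R a) = embR k R (i + a) := by
  rw [embR_eq_legEmb ha, embR_eq_legEmb (by lia), ← legEmb_trans, consecutiveLegs_trans]

theorem legEmb_emb1 {m : ℕ} (hm : 0 + 1 ≤ m) (hk : 0 + m ≤ k) (X : Matrix (Fin N) (Fin N) A) :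
    legEmb (consecutiveLegs 0 hk) (emb1 m X) = emb1 k X := by
  rw [emb1_eq_legEmb hm, emb1_eq_legEmb (by lia), ← legEmb_trans, consecutiveLegs_trans]

theorem emb1_mul (hk : 0 < k) (X Y : Matrix (Fin N) (Fin N) A) :
    emb1 k (X * Y) = emb1 k X * emb1 k Y := by
  have h : 0 + 1 ≤ k := by lia
  simp only [emb1_eq_legEmb h, map_mul]

variable [Algebra ℂ A]

theorem legEmb_liftC {m : ℕ} (σ : Fin m ↪ Fin k) (X : TMat N m ℂ) :
    legEmb σ (liftC A X) = liftC A (legEmb σ X) :=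
  legEmb_map (algebraMap ℂ A) σ X

theorem legEmb_liftC_embR_two (h : 0 + 2 ≤ k) (R : RMat N) :
    legEmb (consecutiveLegs 0 h) (liftC A (embR 2 R 0)) = liftC A (embR k R 0) := by
  rw [legEmb_liftC, legEmb_embR h le_rfl]

theorem liftC_one : liftC A (1 : TMat N k ℂ) = 1 :=
  map_one (algebraMap ℂ A).mapMatrix

theorem liftC_mul (X Y : TMat N k ℂ) : liftC A (X * Y) = liftC A X * liftC A Y :=
  map_mul (algebraMap ℂ A).mapMatrix X Y

end ConsecutiveLegs

section BraidGenerators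

variable {N k : ℕ} {A : Type*} [Ring A] [Algebra ℂ A]

/-- The map `R ↦ R_{i+1}` as a monoid homomorphism. It is constantly `1` when the factors `i` and
`i + 1` do not both exist. -/
def embRHom (N k i : ℕ) : RMat N →* TMat N k ℂ where
  toFun R := embR k R i
  map_one' := by
    rcases le_or_gt (i + 2) k with h | h
    · rw [embR_eq_legEmb h, map_one, map_one]
    · exact embR_of_le (by lia) 1
  map_mul' R S := by
    rcases le_or_gt (i + 2) k with h | h
    · simp only [embR_eq_legEmb h, map_mul]
    · simp only [embR_of_le (show k ≤ i + 1 by lia), mul_one]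

/-- The operator `R_{i+1}` of an invertible `R`, as an invertible matrix over `A`. -/
def braidGen (A : Type*) [Ring A] [Algebra ℂ A] (k : ℕ) (R : (RMat N)ˣ) (i : ℕ) : (TMat N k A)ˣ :=
  Units.map ((algebraMap ℂ A).mapMatrix.toMonoidHom.comp (embRHom N k i)) R

theorem coe_braidGen (R : (RMat N)ˣ) (i : ℕ) :
    (braidGen A k R i : TMat N k A) = liftC A (embR k R i) :=
  rfl

theorem coe_inv_braidGen (R : (RMat N)ˣ) (i : ℕ) :
    (↑(braidGen A k R i)⁻¹ : TMat N k A) = liftC A (embR k ↑R⁻¹ i) :=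
  rfl

theorem embR_braid {R : RMat N} (hR : IsBraiding R) {i : ℕ} (h : i + 2 < k) :
    embR k R i * embR k R (i + 1) * embR k R i =
      embR k R (i + 1) * embR k R i * embR k R (i + 1) := by
  have h3 : i + 3 ≤ k := h
  have := congrArg (legEmb (consecutiveLegs i h3)) hR
  simpa only [map_mul, legEmb_embR h3 (show 0 + 2 ≤ 3 by lia),
    legEmb_embR h3 (show 1 + 2 ≤ 3 by lia), Nat.add_zero] using this

theorem commute_legEmb_liftC_embR {m i j : ℕ} (hi : i + m ≤ k) (hij : i + m ≤ j) (hj : j + 1 < k)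
    (X : TMat N m A) (R : RMat N) :
    Commute (legEmb (consecutiveLegs i hi) X) (liftC A (embR k R j)) := by
  rw [embR_eq_legEmb (show j + 2 ≤ k from hj), ← legEmb_liftC]
  exact commute_legEmb (disjoint_range_consecutiveLegs _ _ hij) fun _ _ _ _ =>
    Algebra.commute_algebraMap_right _ _

theorem isBraidSystem_braidGen {R : (RMat N)ˣ} (hR : IsBraiding (R : RMat N)) :
    IsBraidSystem k (braidGen A k R) where
  commute i j hij hj := by
    have hi : i + 2 ≤ k := by lia
    have := commute_legEmb_liftC_embR hi hij hj (liftC A (embR 2 (R : RMat N) 0)) R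
    rw [legEmb_liftC, legEmb_embR hi le_rfl] at this
    exact Commute.units_of_val this
  braid i hi := Units.ext <| by
    simp only [Units.val_mul, coe_braidGen, ← liftC_mul, embR_braid hR hi]

theorem isCopySystem_copyX (R : (RMat N)ˣ) (X : Matrix (Fin N) (Fin N) A) :
    IsCopySystem k (braidGen A k R) (copyX k R ↑R⁻¹ X) where
  semiconjBy i _ := Units.mk_semiconjBy (braidGen A k R i) (copyX k R ↑R⁻¹ X i)
  commute_zero j hj0 hj := by
    rw [copyX, emb1_eq_legEmb (by lia)]
    exact commute_legEmb_liftC_embR _ (by lia) hj _ _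

theorem liftC_rChainDesc (R : (RMat N)ˣ) (a n : ℕ) :
    liftC A (rChainDesc k R (a + n) (a + 1)) =
      (↑(descChain (braidGen A k R) a n) : TMat N k A) := by
  induction n with
  | zero => simp [rChainDesc, descChain, liftC_one]
  | succ n ih =>
    rw [descChain, Units.val_mul, ← ih, coe_braidGen, ← liftC_mul]
    congr 1
    have hlen : a + (n + 1) + 1 - (a + 1) = n + 1 := by lia
    have hlen' : a + n + 1 - (a + 1) = n := by lia
    have hlast : a + 1 + n - 1 = a + n := by lia
    simp only [rChainDesc, hlen, hlen', List.range'_1_concat, List.reverse_append,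
      List.reverse_singleton, List.singleton_append, List.map_cons, List.prod_cons, hlast]

theorem liftC_rChainAsc_inv (R : (RMat N)ˣ) (a n : ℕ) :
    liftC A (rChainAsc k ↑R⁻¹ (a + 1) (a + n)) =
      (↑(descChain (braidGen A k R) a n)⁻¹ : TMat N k A) := by
  induction n with
  | zero => simp [rChainAsc, descChain, liftC_one]
  | succ n ih =>
    rw [descChain, _root_.mul_inv_rev, Units.val_mul, ← ih, coe_inv_braidGen, ← liftC_mul]
    congr 1
    have hlen : a + (n + 1) + 1 - (a + 1) = n + 1 := by lia
    have hlen' : a + n + 1 - (a + 1) = n := by lia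
    have hlast : a + 1 + n - 1 = a + n := by lia
    simp only [rChainAsc, hlen, hlen', List.range'_1_concat, List.map_append,
      List.map_singleton, List.prod_append, List.prod_singleton, hlast]

theorem copyX_zero_exchange (hk : 0 + 2 ≤ k) (R : (RMat N)ˣ) {M D : Matrix (Fin N) (Fin N) A}
    (hDD : DDRel ↑R⁻¹ D) (hperm : PermRel (R : RMat N) ↑R⁻¹ M D) :
    copyX k R ↑R⁻¹ D 0 * copyX k R ↑R⁻¹ (M * D) 1 =
      copyX k R ↑R⁻¹ (M * D) 1 * copyX k R ↑R⁻¹ D 0 *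
          (↑(braidGen A k R 0)⁻¹ * ↑(braidGen A k R 0)⁻¹)
        + copyX k R ↑R⁻¹ D 0 * ↑(braidGen A k R 0)⁻¹ := by
  have hDD' := congrArg (legEmb (consecutiveLegs 0 hk)) hDD
  have hperm' := congrArg (legEmb (consecutiveLegs 0 hk)) hperm
  simp only [map_mul, map_add, map_one, legEmb_liftC_embR_two, legEmb_emb1 one_le_two]
    at hDD' hperm'
  simp only [copyX, emb1_mul (show 0 < k by lia)]
  exact mul_conj_eq_of_permutation (r := braidGen A k R 0) hDD' hperm'

end BraidGenerators

theorem statement7_general {N : ℕ} (R Rinv : RMat N) (hinv : R * Rinv = 1) (hbr : IsBraiding R)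
    {A : Type _} [Ring A] [Algebra ℂ A] (M D : Matrix (Fin N) (Fin N) A)
    (hDD : DDRel Rinv D) (hperm : PermRel R Rinv M D) (k p : ℕ) (hp : 1 ≤ p) (hpk : p ≤ k - 1) :
    copyX k R Rinv D (p - 1) * copyX k R Rinv (M * D) (k - 1)
      = copyX k R Rinv (M * D) (k - 1) * copyX k R Rinv D (p - 1) *
            liftC A (rChainDesc k R (k - 1) (p + 1) *
              (embR k Rinv (p - 1) * embR k Rinv (p - 1)) *
              rChainAsc k Rinv (p + 1) (k - 1))
        + copyX k R Rinv D (p - 1) *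
            liftC A (rChainDesc k R (k - 1) (p + 1) * embR k Rinv (p - 1) *
              rChainAsc k Rinv (p + 1) (k - 1)) := by
  obtain ⟨R, rfl, rfl⟩ : ∃ u : (RMat N)ˣ, ↑u = R ∧ ↑u⁻¹ = Rinv :=
    ⟨⟨R, Rinv, hinv, mul_eq_one_comm.mp hinv⟩, rfl, rfl⟩
  obtain ⟨i, rfl⟩ := Nat.exists_eq_add_of_le' hp
  obtain ⟨n, hn⟩ := Nat.exists_eq_add_of_le hpk
  have hk : 0 + 2 ≤ k := by lia
  have hin : i + 1 + n < k := by lia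
  rw [Nat.add_sub_cancel, hn]
  simp only [liftC_mul, liftC_rChainDesc, liftC_rChainAsc_inv]
  exact (isCopySystem_copyX R D).exchange (isBraidSystem_braidGen hbr)
    (isCopySystem_copyX R (M * D)) (copyX_zero_exchange hk R hDD hperm) hin

/-- the commutation rule
`D_{p̄} L_{k̄} = L_{k̄} D_{p̄} R_{k−1→p+1} R_p⁻² R⁻¹_{p+1→k−1}
  + D_{p̄} R_{k−1→p+1} R_p⁻¹ R⁻¹_{p+1→k−1}` for `k ≥ 2`, `1 ≤ p ≤ k−1`,
with `L = MD`. -/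
theorem statement7 {N : ℕ} (R Rinv : RMat N) (q : ℂ)
    (hq0 : q ≠ 0) (hq1 : q ≠ 1) (hqm1 : q ≠ -1)
    (hinv : R * Rinv = 1) (hinv' : Rinv * R = 1)
    (hbr : IsBraiding R) (hH : HeckeCond R q)
    {A : Type _} [Ring A] [Algebra ℂ A]
    (M D : Matrix (Fin N) (Fin N) A)
    (hRE : RERel R M) (hDD : DDRel Rinv D) (hperm : PermRel R Rinv M D) :
    ∀ k p : ℕ, 2 ≤ k → 1 ≤ p → p ≤ k - 1 →
      copyX k R Rinv D (p - 1) * copyX k R Rinv (M * D) (k - 1)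
        = copyX k R Rinv (M * D) (k - 1) * copyX k R Rinv D (p - 1) *
              liftC A (rChainDesc k R (k - 1) (p + 1) *
                (embR k Rinv (p - 1) * embR k Rinv (p - 1)) *
                rChainAsc k Rinv (p + 1) (k - 1))
          + copyX k R Rinv D (p - 1) *
              liftC A (rChainDesc k R (k - 1) (p + 1) * embR k Rinv (p - 1) *
                rChainAsc k Rinv (p + 1) (k - 1)) := by
  intro k p _ hp hpk
  exact statement7_general R Rinv hinv hbr M D hDD hperm k p hp hpk
end
end

section
/- Let R be a Hecke symmetry with parameter q such that j_q ≠ 0 for 2 ≤ j ≤ k. Then the R-skew-symmetrizer A^(k) is an idempotent, A^(k) A^(k) = A^(k), and it absorbs the lower skew-symmetrizer: A^(k) A^(k−1) = A^(k−1) A^(k) = A^(k), where A^(k−1) acts in the first k−1 tensor factors of (ℂ^N)^{⊗k}. -/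
open Matrix BigOperators

noncomputable section

/-!
Write `Aₙ` for the skew-symmetrizer on `n` strands. If the last generator acts on the right of
`Aₙ₊₁` by `-q⁻¹`, the middle factor `qⁿ - [n] Tₙ` of the recursion acts there by
`qⁿ + q⁻¹ [n] = [n + 1]`, so `Aₙ₊₁` is idempotent; that `Aₙ₊₁` absorbs `Aₙ` is immediate from the
idempotence of `Aₙ`. To propagate the eigenvalue, expand the right-hand `Aₙ` in `Aₙ Tₙ Aₙ`
by its own recursion, which gives
`[n + 1] Aₙ₊₁ = qⁿ Aₙ - qⁿ⁻¹ Aₙ Tₙ + [n - 1] Aₙ Tₙ Tₙ₋₁ Aₙ₋₁`.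
Under right multiplication by `Tₙ`, the first two terms are handled together by the quadratic
relation, and the third by the braid relation and the inductive hypothesis `Aₙ Tₙ₋₁ = -q⁻¹ Aₙ`.
(Here `T₁, T₂, …` are numbered from one, as in the paper.)

Placing a matrix on a few tensor factors into a larger tensor power is an algebra homomorphism,
so the Hecke relations for `R` on two and three factors hold for all the `Rᵢ`.
-/

section HeckeAlgebra

variable {K B : Type*} [Field K] [Ring B] [Algebra K B]

/-- The `q`-number `[n] = q ^ (n - 1) + q ^ (n - 3) + ⋯ + q ^ (1 - n)`. As a sum it keeps its
meaning at `q = ±1`, where the quotient defining `qNum` degenerates to `0 / 0`. -/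
def quantumInt (q : K) (n : ℕ) : K :=
  ∑ i ∈ Finset.range n, q ^ i * q⁻¹ ^ (n - 1 - i)

theorem quantumInt_one (q : K) : quantumInt q 1 = 1 := by
  simp [quantumInt]

theorem quantumInt_succ (q : K) (n : ℕ) :
    quantumInt q (n + 1) = q ^ n + q⁻¹ * quantumInt q n :=
  (Commute.all q q⁻¹).geom_sum₂_succ_eq

theorem quantumInt_eq_div {q : K} (hq : q ≠ q⁻¹) (n : ℕ) :
    quantumInt q n = (q ^ n - q⁻¹ ^ n) / (q - q⁻¹) :=
  (Commute.all q q⁻¹).geom_sum₂ hq n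

/-- `T 0, …, T (k - 2)` satisfy the defining relations of the Hecke algebra on `k` strands; the
remaining values of `T` are irrelevant. -/
structure IsHeckeFamily (q : K) (T : ℕ → B) (k : ℕ) : Prop where
  quadratic : ∀ i, i + 1 < k → (q • 1 - T i) * (q⁻¹ • 1 + T i) = 0
  braid : ∀ i, i + 2 < k → T i * T (i + 1) * T i = T (i + 1) * T i * T (i + 1)
  commute : ∀ i j, i + 1 < j → j + 1 < k → Commute (T i) (T j)

/-- The skew-symmetrizer on the first `n` strands built from the generators `T`, which in a
Hecke algebra is the idempotent of the representation `T i ↦ -q⁻¹`. -/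
def skewSymmetrizer (q : K) (T : ℕ → B) : ℕ → B
  | 0 => 1
  | 1 => 1
  | n + 2 => (quantumInt q (n + 2))⁻¹ •
      (skewSymmetrizer q T (n + 1) * (q ^ (n + 1) • 1 - quantumInt q (n + 1) • T n) *
        skewSymmetrizer q T (n + 1))

section

variable (q : K) (T : ℕ → B)

theorem skewSymmetrizer_zero : skewSymmetrizer q T 0 = 1 := by
  rw [skewSymmetrizer]

theorem skewSymmetrizer_one : skewSymmetrizer q T 1 = 1 := by
  rw [skewSymmetrizer]

theorem skewSymmetrizer_add_two (n : ℕ) :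
    skewSymmetrizer q T (n + 2) = (quantumInt q (n + 2))⁻¹ •
      (skewSymmetrizer q T (n + 1) * (q ^ (n + 1) • 1 - quantumInt q (n + 1) • T n) *
        skewSymmetrizer q T (n + 1)) := by
  rw [skewSymmetrizer]

end

variable {q : K} {T : ℕ → B} {k n : ℕ}

theorem skewSymmetrizer_two : skewSymmetrizer q T 2 = (quantumInt q 2)⁻¹ • (q • 1 - T 0) := by
  simp [skewSymmetrizer_add_two, skewSymmetrizer_one, quantumInt_one]

theorem skewSymmetrizer_mul_pred (h : IsIdempotentElem (skewSymmetrizer q T (n + 1))) :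
    skewSymmetrizer q T (n + 2) * skewSymmetrizer q T (n + 1) = skewSymmetrizer q T (n + 2) := by
  rw [skewSymmetrizer_add_two, smul_mul_assoc, mul_assoc, h.eq]

theorem pred_mul_skewSymmetrizer (h : IsIdempotentElem (skewSymmetrizer q T (n + 1))) :
    skewSymmetrizer q T (n + 1) * skewSymmetrizer q T (n + 2) = skewSymmetrizer q T (n + 2) := by
  rw [skewSymmetrizer_add_two, mul_smul_comm, ← mul_assoc, ← mul_assoc, h.eq]

theorem isIdempotentElem_skewSymmetrizer_add_two (hn : quantumInt q (n + 2) ≠ 0)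
    (hA : IsIdempotentElem (skewSymmetrizer q T (n + 1)))
    (hT : skewSymmetrizer q T (n + 2) * T n = -q⁻¹ • skewSymmetrizer q T (n + 2)) :
    IsIdempotentElem (skewSymmetrizer q T (n + 2)) := by
  have hmid : skewSymmetrizer q T (n + 2) * (q ^ (n + 1) • 1 - quantumInt q (n + 1) • T n) =
      quantumInt q (n + 2) • skewSymmetrizer q T (n + 2) := by
    rw [mul_sub, mul_smul_comm, mul_smul_comm, mul_one, hT, quantumInt_succ q (n + 1)]
    module
  calc skewSymmetrizer q T (n + 2) * skewSymmetrizer q T (n + 2)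
      = (quantumInt q (n + 2))⁻¹ • (skewSymmetrizer q T (n + 2) * skewSymmetrizer q T (n + 1) *
          (q ^ (n + 1) • 1 - quantumInt q (n + 1) • T n) * skewSymmetrizer q T (n + 1)) := by
        conv_lhs => rw [skewSymmetrizer_add_two q T n, mul_smul_comm]
        rw [← skewSymmetrizer_add_two]
        simp only [mul_assoc]
    _ = skewSymmetrizer q T (n + 2) := by
        rw [skewSymmetrizer_mul_pred hA, hmid, smul_mul_assoc, skewSymmetrizer_mul_pred hA,
          inv_smul_smul₀ hn]

namespace IsHeckeFamily

theorem mul_self (hT : IsHeckeFamily q T k) (hq : q ≠ 0) (hn : n + 1 < k) :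
    T n * T n = 1 + (q - q⁻¹) • T n := by
  have hexpand : (q • 1 - T n) * (q⁻¹ • 1 + T n) = 1 + (q - q⁻¹) • T n - T n * T n := by
    simp only [sub_mul, mul_add, smul_mul_assoc, mul_smul_comm, one_mul, mul_one]
    rw [smul_sub, inv_smul_smul₀ hq]
    module
  exact (sub_eq_zero.mp (hexpand.symm.trans (hT.quadratic n hn))).symm

theorem commute_skewSymmetrizer (hT : IsHeckeFamily q T k) {i : ℕ} (hi : i + 1 < k) :
    ∀ n ≤ i, Commute (skewSymmetrizer q T n) (T i)
  | 0, _ => by rw [skewSymmetrizer_zero]; exact Commute.one_left _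
  | 1, _ => by rw [skewSymmetrizer_one]; exact Commute.one_left _
  | n + 2, hn => by
    have ih := hT.commute_skewSymmetrizer hi (n + 1) (by lia)
    have hmid : Commute (q ^ (n + 1) • 1 - quantumInt q (n + 1) • T n) (T i) :=
      ((Commute.one_left _).smul_left _).sub_left ((hT.commute n i hn hi).smul_left _)
    rw [skewSymmetrizer_add_two]
    exact ((ih.mul_left hmid).mul_left ih).smul_left _

theorem skewSymmetrizer_two_mul (hT : IsHeckeFamily q T k) (hq : q ≠ 0) (hk : 1 < k) :
    skewSymmetrizer q T 2 * T 0 = -q⁻¹ • skewSymmetrizer q T 2 := by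
  have h : (q • 1 - T 0) * T 0 = -q⁻¹ • (q • 1 - T 0) := by
    rw [sub_mul, smul_mul_assoc, one_mul, hT.mul_self hq hk, neg_smul, smul_sub,
      inv_smul_smul₀ hq]
    module
  rw [skewSymmetrizer_two, smul_mul_assoc, h, smul_comm]

theorem skewSymmetrizer_mul_mul_pred (hT : IsHeckeFamily q T k) (hn : n + 2 < k)
    (hA : IsIdempotentElem (skewSymmetrizer q T (n + 1))) :
    skewSymmetrizer q T (n + 2) * T (n + 1) * skewSymmetrizer q T (n + 1) =
      skewSymmetrizer q T (n + 2) * T (n + 1) := by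
  have hcomm := hT.commute_skewSymmetrizer hn (n + 1) le_rfl
  rw [mul_assoc, ← hcomm.eq, ← mul_assoc, skewSymmetrizer_mul_pred hA]

theorem skewSymmetrizer_mul_mul_self (hT : IsHeckeFamily q T k) (hn : n + 2 < k)
    (hA : IsIdempotentElem (skewSymmetrizer q T (n + 1))) :
    skewSymmetrizer q T (n + 2) * T (n + 1) * skewSymmetrizer q T (n + 2) =
      (quantumInt q (n + 2))⁻¹ • (q ^ (n + 1) • (skewSymmetrizer q T (n + 2) * T (n + 1)) -
        quantumInt q (n + 1) •
          (skewSymmetrizer q T (n + 2) * T (n + 1) * T n * skewSymmetrizer q T (n + 1))) := by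
  have habsorb := hT.skewSymmetrizer_mul_mul_pred hn hA
  conv_lhs => rw [skewSymmetrizer_add_two q T n, mul_smul_comm]
  rw [← skewSymmetrizer_add_two, ← mul_assoc, ← mul_assoc, habsorb, mul_sub, sub_mul,
    mul_smul_comm, mul_smul_comm, mul_one, smul_mul_assoc, smul_mul_assoc, habsorb]

theorem skewSymmetrizer_add_three (hT : IsHeckeFamily q T k) (hn : n + 2 < k)
    (hne : quantumInt q (n + 2) ≠ 0) (hA : IsIdempotentElem (skewSymmetrizer q T (n + 1)))
    (hA' : IsIdempotentElem (skewSymmetrizer q T (n + 2))) :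
    skewSymmetrizer q T (n + 3) = (quantumInt q (n + 3))⁻¹ •
      (q ^ (n + 2) • skewSymmetrizer q T (n + 2) -
        q ^ (n + 1) • (skewSymmetrizer q T (n + 2) * T (n + 1)) +
        quantumInt q (n + 1) •
          (skewSymmetrizer q T (n + 2) * T (n + 1) * T n * skewSymmetrizer q T (n + 1))) := by
  rw [skewSymmetrizer_add_two, mul_sub, sub_mul, mul_smul_comm, mul_smul_comm, mul_one,
    smul_mul_assoc, smul_mul_assoc, hA'.eq, hT.skewSymmetrizer_mul_mul_self hn hA,
    smul_inv_smul₀ hne, sub_sub_eq_add_sub, add_sub_right_comm]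

theorem skewSymmetrizer_mul_braid (hT : IsHeckeFamily q T k) (hn : n + 2 < k)
    (hlast : skewSymmetrizer q T (n + 2) * T n = -q⁻¹ • skewSymmetrizer q T (n + 2)) :
    skewSymmetrizer q T (n + 2) * T (n + 1) * T n * skewSymmetrizer q T (n + 1) * T (n + 1) =
      -q⁻¹ •
        (skewSymmetrizer q T (n + 2) * T (n + 1) * T n * skewSymmetrizer q T (n + 1)) := by
  have hcomm := hT.commute_skewSymmetrizer hn (n + 1) le_rfl
  calc skewSymmetrizer q T (n + 2) * T (n + 1) * T n * skewSymmetrizer q T (n + 1) * T (n + 1)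
      = skewSymmetrizer q T (n + 2) * (T (n + 1) * T n * T (n + 1)) *
          skewSymmetrizer q T (n + 1) := by
        simp only [mul_assoc, hcomm.eq]
    _ = skewSymmetrizer q T (n + 2) * T n * T (n + 1) * T n * skewSymmetrizer q T (n + 1) := by
        rw [← hT.braid n hn]
        simp only [mul_assoc]
    _ = _ := by
        rw [hlast]
        simp only [smul_mul_assoc]

theorem skewSymmetrizer_add_three_mul (hT : IsHeckeFamily q T k) (hq : q ≠ 0) (hn : n + 2 < k)
    (hne : quantumInt q (n + 2) ≠ 0) (hA : IsIdempotentElem (skewSymmetrizer q T (n + 1)))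
    (hA' : IsIdempotentElem (skewSymmetrizer q T (n + 2)))
    (hlast : skewSymmetrizer q T (n + 2) * T n = -q⁻¹ • skewSymmetrizer q T (n + 2)) :
    skewSymmetrizer q T (n + 3) * T (n + 1) = -q⁻¹ • skewSymmetrizer q T (n + 3) := by
  have hsq : skewSymmetrizer q T (n + 2) * T (n + 1) * T (n + 1) =
      skewSymmetrizer q T (n + 2) + (q - q⁻¹) • (skewSymmetrizer q T (n + 2) * T (n + 1)) := by
    rw [mul_assoc, hT.mul_self hq hn, mul_add, mul_one, mul_smul_comm]
  rw [hT.skewSymmetrizer_add_three hn hne hA hA', smul_mul_assoc, smul_comm (-q⁻¹)]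
  congr 1
  rw [add_mul, sub_mul, smul_mul_assoc, smul_mul_assoc, smul_mul_assoc, hsq,
    hT.skewSymmetrizer_mul_braid hn hlast]
  match_scalars
  · field_simp
    ring
  · field_simp
    ring
  · ring

theorem isIdempotentElem_and_mul_last (hT : IsHeckeFamily q T k) (hq : q ≠ 0)
    (hne : ∀ j, 2 ≤ j → j ≤ k → quantumInt q j ≠ 0) (hn : n + 1 < k) :
    IsIdempotentElem (skewSymmetrizer q T (n + 1)) ∧
      skewSymmetrizer q T (n + 2) * T n = -q⁻¹ • skewSymmetrizer q T (n + 2) := by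
  induction n with
  | zero => exact ⟨by rw [skewSymmetrizer_one]; exact .one, hT.skewSymmetrizer_two_mul hq hn⟩
  | succ n ih =>
    obtain ⟨hA, hlast⟩ := ih (by lia)
    have hne₂ := hne (n + 2) (by lia) (by lia)
    have hA' := isIdempotentElem_skewSymmetrizer_add_two hne₂ hA hlast
    exact ⟨hA', hT.skewSymmetrizer_add_three_mul hq hn hne₂ hA hA' hlast⟩

theorem isIdempotentElem_skewSymmetrizer (hT : IsHeckeFamily q T k) (hq : q ≠ 0)
    (hne : ∀ j, 2 ≤ j → j ≤ k → quantumInt q j ≠ 0) :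
    ∀ n ≤ k, IsIdempotentElem (skewSymmetrizer q T n)
  | 0, _ => by rw [skewSymmetrizer_zero]; exact .one
  | 1, _ => by rw [skewSymmetrizer_one]; exact .one
  | n + 2, hn =>
    have ⟨hA, hlast⟩ := hT.isIdempotentElem_and_mul_last hq hne hn
    isIdempotentElem_skewSymmetrizer_add_two (hne (n + 2) (by lia) hn) hA hlast

end IsHeckeFamily

theorem statement10_general {K B : Type*} [Field K] [Ring B] [Algebra K B] {q : K} {T : ℕ → B}
    {k : ℕ} (hq : q ≠ 0) (hT : IsHeckeFamily q T k)
    (hqk : ∀ j : ℕ, 2 ≤ j → j ≤ k → quantumInt q j ≠ 0) :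
    skewSymmetrizer q T k * skewSymmetrizer q T k = skewSymmetrizer q T k ∧
    skewSymmetrizer q T k * skewSymmetrizer q T (k - 1) = skewSymmetrizer q T k ∧
    skewSymmetrizer q T (k - 1) * skewSymmetrizer q T k = skewSymmetrizer q T k := by
  have hidem := hT.isIdempotentElem_skewSymmetrizer hq hqk
  refine ⟨hidem k le_rfl, ?_⟩
  match k with
  | 0 | 1 => simp [skewSymmetrizer_zero, skewSymmetrizer_one]
  | n + 2 =>
    have hpred := hidem (n + 1) (Nat.le_succ _)
    exact ⟨skewSymmetrizer_mul_pred hpred, pred_mul_skewSymmetrizer hpred⟩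

end HeckeAlgebra

section Ampliation

variable {ι ι' κ n S : Type*} [CommSemiring S]

open Classical in
/-- The ampliation of `X`: it acts as `X` on the tensor factors indexed by the range of `e`,
and as the identity on the others. -/
def ampliate (e : ι ↪ κ) (X : Matrix (ι → n) (ι → n) S) : Matrix (κ → n) (κ → n) S := fun f g =>
  if Set.EqOn f g (Set.range e)ᶜ then X (f ∘ e) (g ∘ e) else 0

theorem ampliate_one [Fintype ι] [Fintype κ] [DecidableEq n] (e : ι ↪ κ) :
    ampliate e (1 : Matrix (ι → n) (ι → n) S) = 1 := by
  ext f g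
  have hfg : f = g ↔ Set.EqOn f g (Set.range e)ᶜ ∧ f ∘ e = g ∘ e := by
    rw [← Set.eqOn_univ, ← Set.compl_union_self (Set.range e), Set.eqOn_union, Set.eqOn_range]
  simp only [ampliate, Matrix.one_apply, ← ite_and, ← hfg]

theorem eqOn_compl_range_iff (e : ι ↪ κ) (f g : κ → n) :
    Set.EqOn f g (Set.range e)ᶜ ↔ ∃ u, Function.extend e u f = g := by
  constructor
  · refine fun h => ⟨g ∘ e, funext fun j => ?_⟩
    by_cases hj : ∃ i, e i = j
    · obtain ⟨i, rfl⟩ := hj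
      exact e.injective.extend_apply _ _ i
    · rw [Function.extend_apply' _ _ _ hj, h hj]
  · rintro ⟨u, rfl⟩ j hj
    exact (Function.extend_apply' _ _ _ hj).symm

theorem extend_extend (e : ι → κ) (u v : ι → n) (f : κ → n) :
    Function.extend e v (Function.extend e u f) = Function.extend e v f := by
  classical
  funext j
  simp only [Function.extend_def]
  split_ifs <;> rfl

theorem extend_comp_of_disjoint {e : ι → κ} {e' : ι' → κ}
    (h : Disjoint (Set.range e) (Set.range e')) (u : ι → n) (f : κ → n) :
    Function.extend e u f ∘ e' = f ∘ e' :=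
  funext fun i => Function.extend_apply' _ _ _
    (Set.disjoint_right.mp h (Set.mem_range_self i))

theorem extend_extend_comm {e : ι → κ} {e' : ι' → κ}
    (h : Disjoint (Set.range e) (Set.range e')) (u : ι → n) (v : ι' → n) (f : κ → n) :
    Function.extend e u (Function.extend e' v f) =
      Function.extend e' v (Function.extend e u f) := by
  classical
  funext j
  simp only [Function.extend_def]
  split_ifs with hj hj'
  · exact absurd hj' (Set.disjoint_left.mp h hj)
  all_goals rfl

variable [Fintype κ] [Fintype n] [DecidableEq κ]

theorem ampliate_mul_apply [Fintype ι] [DecidableEq ι] (e : ι ↪ κ) (X : Matrix (ι → n) (ι → n) S)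
    (M : Matrix (κ → n) (κ → n) S) (f g : κ → n) :
    (ampliate e X * M) f g = ∑ u, X (f ∘ e) u * M (Function.extend e u f) g := by
  symm
  refine Fintype.sum_of_injective _ (Function.extend_injective e.injective f) _ _
    (fun f' hf' => ?_) (fun u => ?_)
  · simp only [ampliate, if_neg (mt (eqOn_compl_range_iff e f f').mp hf'), zero_mul]
  · simp only [ampliate, if_pos ((eqOn_compl_range_iff e f _).mpr ⟨u, rfl⟩),
      Function.extend_comp e.injective]

theorem commute_ampliate {e : ι ↪ κ} {e' : ι' ↪ κ} (h : Disjoint (Set.range e) (Set.range e'))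
    (X : Matrix (ι → n) (ι → n) S) (Y : Matrix (ι' → n) (ι' → n) S) :
    Commute (ampliate e X) (ampliate e' Y) := by
  classical
  let _ := Fintype.ofInjective e e.injective
  let _ := Fintype.ofInjective e' e'.injective
  suffices hM : ∀ M, ampliate e X * (ampliate e' Y * M) = ampliate e' Y * (ampliate e X * M) by
    simpa only [mul_one, commute_iff_eq] using hM 1
  intro M
  ext f g
  simp only [ampliate_mul_apply, extend_comp_of_disjoint h, extend_comp_of_disjoint h.symm,
    extend_extend_comm h, Finset.mul_sum]
  rw [Finset.sum_comm]
  simp only [mul_left_comm]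

variable [Fintype ι] [DecidableEq ι]

theorem ampliate_mul (e : ι ↪ κ) (X Y : Matrix (ι → n) (ι → n) S) :
    ampliate e (X * Y) = ampliate e X * ampliate e Y := by
  classical
  suffices h : ∀ M, ampliate e (X * Y) * M = ampliate e X * (ampliate e Y * M) by
    simpa only [mul_one] using h 1
  intro M
  ext f g
  simp only [ampliate_mul_apply, Function.extend_comp e.injective, extend_extend]
  simp only [Matrix.mul_apply, Finset.sum_mul, Finset.mul_sum, mul_assoc]
  exact Finset.sum_comm

variable [DecidableEq n]

/-- Ampliation along `e` as a homomorphism of matrix algebras, for transporting relations between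
matrices on few tensor factors to many. -/
def ampliateAlgHom (e : ι ↪ κ) : Matrix (ι → n) (ι → n) S →ₐ[S] Matrix (κ → n) (κ → n) S :=
  AlgHom.ofLinearMap
    { toFun := ampliate e
      map_add' X Y := by
        ext f g
        simp only [ampliate, Matrix.add_apply]
        split_ifs <;> simp only [add_zero]
      map_smul' c X := by
        ext f g
        simp only [ampliate, Matrix.smul_apply, smul_ite, smul_zero, RingHom.id_apply] }
    (ampliate_one e) (ampliate_mul e)

end Ampliation

section EmbR

variable {N k : ℕ} {R : RMat N}

/-- The inclusion of `m` consecutive tensor factors, starting at the `i`-th, into all `k`. -/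
def consecutiveEmb {m i : ℕ} (h : i + m ≤ k) : Fin m ↪ Fin k :=
  (Fin.natAddEmb i).trans (Fin.castLEEmb h)

theorem val_consecutiveEmb {m i : ℕ} (h : i + m ≤ k) (a : Fin m) :
    (consecutiveEmb h a : ℕ) = i + a :=
  rfl

theorem mem_range_consecutiveEmb {m i : ℕ} (h : i + m ≤ k) (j : Fin k) :
    j ∈ Set.range (consecutiveEmb h) ↔ i ≤ j ∧ j < i + m := by
  constructor
  · rintro ⟨a, rfl⟩
    rw [val_consecutiveEmb]
    lia
  · rintro ⟨hij, hjm⟩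
    exact ⟨⟨j - i, by lia⟩, Fin.ext (Nat.add_sub_cancel' hij)⟩

theorem embR_add (R : RMat N) {m i l : ℕ} (h : i + m ≤ k) (hl : l + 1 < m) :
    embR k R (i + l) = ampliateAlgHom (consecutiveEmb h) (embR m R l) := by
  ext f g
  have hoff : (∀ j : Fin k, j.val ≠ i + l → j.val ≠ i + l + 1 → f j = g j) ↔
      Set.EqOn f g (Set.range (consecutiveEmb h))ᶜ ∧ ∀ a : Fin m, a.val ≠ l → a.val ≠ l + 1 →
        (f ∘ consecutiveEmb h) a = (g ∘ consecutiveEmb h) a := by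
    constructor
    · refine fun H => ⟨fun j hj => ?_, fun a ha ha' => ?_⟩
      · rw [Set.mem_compl_iff, mem_range_consecutiveEmb] at hj
        exact H j (by lia) (by lia)
      · exact H _ (by rw [val_consecutiveEmb]; lia) (by rw [val_consecutiveEmb]; lia)
    · rintro ⟨hout, hin⟩ j hj hj'
      by_cases hmem : j ∈ Set.range (consecutiveEmb h)
      · obtain ⟨a, rfl⟩ := hmem
        rw [val_consecutiveEmb] at hj hj'
        exact hin a (by lia) (by lia)
      · exact hout hmem
  change _ = ampliate (consecutiveEmb h) (embR m R l) f g
  simp only [embR, ampliate, dif_pos hl, dif_pos (show i + l + 1 < k by lia), ← ite_and, ← hoff]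
  rfl

theorem embR_two_zero (R : RMat N) :
    embR 2 R 0 = Matrix.reindexAlgEquiv ℂ ℂ (finTwoArrowEquiv (Fin N)).symm R := by
  ext f g
  have hvac : ∀ j : Fin 2, j.val ≠ 0 → j.val ≠ 0 + 1 → f j = g j := by
    intro j hj hj'
    lia
  simp only [embR, if_pos hvac]
  rfl

theorem embR_eq_ampliateAlgHom (R : RMat N) {i : ℕ} (h : i + 2 ≤ k) :
    embR k R i = ampliateAlgHom (consecutiveEmb h)
      (Matrix.reindexAlgEquiv ℂ ℂ (finTwoArrowEquiv (Fin N)).symm R) := by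
  rw [← embR_two_zero]
  exact embR_add R h one_lt_two

theorem HeckeCond.quadratic_embR {q : ℂ} (hH : HeckeCond R q) {i : ℕ} (hi : i + 1 < k) :
    (q • 1 - embR k R i) * (q⁻¹ • 1 + embR k R i) = 0 := by
  rw [embR_eq_ampliateAlgHom R hi]
  simpa only [map_mul, map_sub, map_add, map_smul, map_one, map_zero] using
    congrArg (fun X => ampliateAlgHom (consecutiveEmb (Nat.succ_le_of_lt hi))
      (Matrix.reindexAlgEquiv ℂ ℂ (finTwoArrowEquiv (Fin N)).symm X)) hH

theorem IsBraiding.braid_embR (hbr : IsBraiding R) {i : ℕ} (hi : i + 2 < k) :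
    embR k R i * embR k R (i + 1) * embR k R i =
      embR k R (i + 1) * embR k R i * embR k R (i + 1) := by
  have h₀ : embR k R i = _ := embR_add R (l := 0) (m := 3) hi (by norm_num)
  have h₁ : embR k R (i + 1) = _ := embR_add R (l := 1) (m := 3) hi (by norm_num)
  rw [h₀, h₁]
  simpa only [map_mul] using congrArg (ampliateAlgHom (consecutiveEmb _)) hbr

theorem commute_embR (R : RMat N) {i j : ℕ} (hij : i + 1 < j) (hj : j + 1 < k) :
    Commute (embR k R i) (embR k R j) := by
  rw [embR_eq_ampliateAlgHom R (show i + 2 ≤ k by lia), embR_eq_ampliateAlgHom R hj]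
  refine commute_ampliate (Set.disjoint_left.mpr fun a ha ha' => ?_) _ _
  rw [mem_range_consecutiveEmb] at ha ha'
  lia

theorem isHeckeFamily_embR {q : ℂ} (hbr : IsBraiding R) (hH : HeckeCond R q) :
    IsHeckeFamily q (embR k R) k where
  quadratic _ := hH.quadratic_embR
  braid _ := hbr.braid_embR
  commute _ _ := commute_embR R

theorem qNum_eq_quantumInt {q : ℂ} (hq : q ≠ q⁻¹) (j : ℕ) : qNum q j = quantumInt q j :=
  (quantumInt_eq_div hq j).symm

theorem Asym_eq_skewSymmetrizer (R : RMat N) {q : ℂ} (hq : q ≠ q⁻¹) :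
    ∀ j, Asym k R q j = skewSymmetrizer q (embR k R) j
  | 0 => by rw [Asym, skewSymmetrizer_zero]
  | 1 => by rw [Asym, skewSymmetrizer_one]
  | j + 2 => by
    rw [Asym, skewSymmetrizer_add_two, Asym_eq_skewSymmetrizer R hq (j + 1),
      qNum_eq_quantumInt hq, qNum_eq_quantumInt hq]

end EmbR

/-- the skew-symmetrizer is an idempotent and absorbs the lower
skew-symmetrizer:  `A^(k) A^(k) = A^(k)` and
`A^(k) A^(k−1) = A^(k−1) A^(k) = A^(k)`. -/
theorem statement10 {N : ℕ} (R Rinv : RMat N) (q : ℂ) (k : ℕ)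
    (hq0 : q ≠ 0) (hq1 : q ≠ 1) (hqm1 : q ≠ -1)
    (hinv : R * Rinv = 1) (hinv' : Rinv * R = 1)
    (hbr : IsBraiding R) (hH : HeckeCond R q)
    (hqk : ∀ j : ℕ, 2 ≤ j → j ≤ k → qNum q j ≠ 0) :
    Asym k R q k * Asym k R q k = Asym k R q k ∧
    Asym k R q k * Asym k R q (k - 1) = Asym k R q k ∧
    Asym k R q (k - 1) * Asym k R q k = Asym k R q k := by
  have hq : q ≠ q⁻¹ := by simp [self_eq_inv₀, hq0, hq1, hqm1]
  simp only [Asym_eq_skewSymmetrizer R hq, qNum_eq_quantumInt hq] at hqk ⊢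
  exact statement10_general hq0 (isHeckeFamily_embR hbr hH) hqk
end
end
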